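/- arXiv:0810.2497 — 5 statements merged into one kernel-verified Lean document; each statement's English description precedes it below -/
import Mathlib

section
/- Let A be a C*-algebra, I a closed two-sided ideal of A, and T : A → A an elementary operator, i.e. T(x) = Σ_{i=1}^N a_i x b_i for some elements a_1,…,a_N, b_1,…,b_N of the minimal unitization of A. Then the closure of T(I) is proximinal in the closure of T(A): for every x in the closure of T(A) there exists y in the closure of T(I) such that ‖x − y‖ = dist(x, closure(T(I))). -/
/-!
Write `X` and `Y` for the closures of `T(A)` and `T(I)`. An approximate unit `e` of `I` behaves
weakly like a central projection: for every functional `φ` both `φ (e a (1 - e))` and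
`φ ((1 - e) a e)` tend to `0` (`IsApproxUnit.tendsto_off_diag`). This follows from
`φ ((1 - e) y) → 0` uniformly on bounded sets of `y ∈ I`, because an element of `I` that nearly
norms `φ|I` becomes almost orthogonal to `(1 - e) y` (`exists_norming`).

Let `z ∈ X`, let `y' ∈ Y` satisfy `‖z - y'‖ ≤ r`, and let `(1 - t) ‖z‖ ≤ r`. Weakly,
`(1 - t e) z` is close to `e ((1 - t) z) e + (1 - e) (z - y') (1 - e)`, whose norm is at most `r`
by operator convexity of the square (`norm_conj_add_conj_le`), and the commutators of `e` with the
left coefficients `a i` are weakly close to `0`. Since these requirements are convex in `e`, the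
Hahn-Banach theorem supplies an `e` meeting them in norm (`exists_quasicentral`). For such an `e`
and `z ≈ T x₀`, the element `T (t e x₀)` of `T(I)` is close to `t e z`; so some `y ∈ Y` has norm
at most about `t ‖z‖` and satisfies `‖z - y‖ ≤ r` up to an arbitrarily small error.

Thus an approximant of `x` in `Y` that is optimal up to `ε` lies within `2 ε` of one that is
optimal up to `ε / 2`, and iterating converges to a best approximation
(`exists_best_approx_of_step`).
-/

open Filter Topology

/-! ### Norm estimates and approximate units -/

lemma smul_mem_ideal {B : Type*} [CStarAlgebra B] (J : TwoSidedIdeal B) (c : ℂ) {x : B} (hx : x ∈ J) : c • x ∈ J := by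
  have := J.mul_mem_left (c • 1) x hx
  simpa using this

section CStar

variable {B : Type*} [CStarAlgebra B] [PartialOrder B] [StarOrderedRing B]

lemma mul_one_sub_nonneg {e : B} (h0 : 0 ≤ e) (h1 : e ≤ 1) : 0 ≤ e * (1 - e) := by
  have he : star e = e := (IsSelfAdjoint.of_nonneg h0).star_eq
  have h1' : 0 ≤ 1 - e := sub_nonneg.2 h1
  have a1 := star_left_conjugate_nonneg h1' e
  have a2 := star_left_conjugate_nonneg h0 (1 - e)
  have : e * (1 - e) = star e * (1 - e) * e + star (1 - e) * e * (1 - e) := by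
    rw [star_sub, star_one, he]; noncomm_ring
  rw [this]
  exact add_nonneg a1 a2

/-- Operator convexity of the square, with the operator weights `e` and `1 - e`. -/
lemma star_mul_self_convex {e : B} (h0 : 0 ≤ e) (h1 : e ≤ 1) (x y : B) :
    star (e * x + (1 - e) * y) * (e * x + (1 - e) * y)
      ≤ star x * e * x + star y * (1 - e) * y := by
  have he : star e = e := (IsSelfAdjoint.of_nonneg h0).star_eq
  have key := star_left_conjugate_nonneg (mul_one_sub_nonneg h0 h1) (x - y)
  rw [← sub_nonneg]
  convert key using 1
  simp only [star_add, star_mul, star_sub, star_one, he]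
  noncomm_ring

/-- Cutting down `u` by `e` and `v` by `1 - e` on both sides does not increase the norm beyond
the larger of the two norms. -/
lemma norm_conj_add_conj_le {e : B} (h0 : 0 ≤ e) (h1 : e ≤ 1) {u v : B} {r : ℝ}
    (hu : ‖u‖ ≤ r) (hv : ‖v‖ ≤ r) :
    ‖e * u * e + (1 - e) * v * (1 - e)‖ ≤ r := by
  have hr : 0 ≤ r := (norm_nonneg u).trans hu
  have he : star e = e := (IsSelfAdjoint.of_nonneg h0).star_eq
  have h1' : 0 ≤ 1 - e := sub_nonneg.2 h1
  have hh : star (1 - e) = 1 - e := (IsSelfAdjoint.of_nonneg h1').star_eq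
  have bound : ∀ (f w : B), f ≤ 1 → ‖w‖ ≤ r → star w * f * w ≤ algebraMap ℝ B (r ^ 2) := by
    intro f w hf hw
    calc star w * f * w ≤ star w * 1 * w := star_left_conjugate_le_conjugate hf w
      _ = star w * w := by rw [mul_one]
      _ ≤ algebraMap ℝ B (‖w‖ ^ 2) := CStarAlgebra.star_mul_le_algebraMap_norm_sq
      _ ≤ algebraMap ℝ B (r ^ 2) := by
          apply algebraMap_mono
          gcongr
  have b1 := star_left_conjugate_le_conjugate (bound e u h1 hu) e
  have b2 := star_left_conjugate_le_conjugate (bound (1 - e) v (by simpa using h0) hv) (1 - e)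
  have c1 := star_mul_self_convex h0 h1 (u * e) (v * (1 - e))
  have c2 : 0 ≤ (r ^ 2) • (e * (1 - e)) := smul_nonneg (by positivity) (mul_one_sub_nonneg h0 h1)
  set w := e * u * e + (1 - e) * v * (1 - e) with hw
  have key : star w * w ≤ algebraMap ℝ B (r ^ 2) := by
    calc star w * w
        ≤ star (u * e) * e * (u * e) + star (v * (1 - e)) * (1 - e) * (v * (1 - e)) := by
          simpa only [hw, mul_assoc] using c1
      _ = star e * (star u * e * u) * e + star (1 - e) * (star v * (1 - e) * v) * (1 - e) := by
          simp only [star_mul, mul_assoc]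
      _ ≤ star e * algebraMap ℝ B (r ^ 2) * e
            + star (1 - e) * algebraMap ℝ B (r ^ 2) * (1 - e) := add_le_add b1 b2
      _ ≤ star e * algebraMap ℝ B (r ^ 2) * e
            + star (1 - e) * algebraMap ℝ B (r ^ 2) * (1 - e)
            + ((r ^ 2) • (e * (1 - e)) + (r ^ 2) • (e * (1 - e))) :=
          le_add_of_nonneg_right (add_nonneg c2 c2)
      _ = algebraMap ℝ B (r ^ 2) := by
          rw [hh, he, Algebra.algebraMap_eq_smul_one]
          simp only [mul_smul_comm, smul_mul_assoc, ← smul_add, mul_one]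
          congr 1
          noncomm_ring
  have := (CStarAlgebra.norm_le_iff_le_algebraMap _ (by positivity) (star_mul_self_nonneg w)).2 key
  rw [CStarRing.norm_star_mul_self] at this
  nlinarith [norm_nonneg w]

/-- Every finite subset of an ideal has an approximate local unit, namely `h (h + δ)⁻¹` with
`h = ∑ (x⋆ x + x x⋆)`. -/
lemma exists_local_unit (J : TwoSidedIdeal B) (F : Finset B) (hF : ∀ x ∈ F, x ∈ J)
    {δ : ℝ} (hδ : 0 < δ) :
    ∃ e ∈ J, 0 ≤ e ∧ e ≤ 1 ∧ ∀ x ∈ F, ‖(1 - e) * x‖ ≤ δ ∧ ‖x * (1 - e)‖ ≤ δ := by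
  set h : B := ∑ x ∈ F, (star x * x + x * star x) with hh
  have hhJ : h ∈ J := by
    refine sum_mem fun x hx => ?_
    exact J.add_mem (J.mul_mem_left _ _ (hF x hx)) (J.mul_mem_right _ _ (hF x hx))
  have hpos : ∀ x ∈ F, 0 ≤ star x * x + x * star x := fun x _ =>
    add_nonneg (star_mul_self_nonneg x) (mul_star_self_nonneg x)
  have h0 : 0 ≤ h := Finset.sum_nonneg hpos
  set γ : ℝ := δ ^ 2 with hγ
  have hγ0 : 0 < γ := by positivity
  have hs : ∀ s ∈ spectrum ℝ h, 0 ≤ s := fun s hs => spectrum_nonneg_of_nonneg h0 hs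
  have hne : ∀ s ∈ spectrum ℝ h, s + γ ≠ 0 := fun s h' => by have := hs s h'; positivity
  have hci : ContinuousOn (fun s : ℝ => (s + γ)⁻¹) (spectrum ℝ h) :=
    ContinuousOn.inv₀ (by fun_prop) hne
  have hcs : ContinuousOn (fun s : ℝ => s * (s + γ)⁻¹) (spectrum ℝ h) := by fun_prop
  set e : B := cfc (fun s : ℝ => s * (s + γ)⁻¹) h with he
  have hsa : IsSelfAdjoint h := IsSelfAdjoint.of_nonneg h0
  have heq : e = h * cfc (fun s : ℝ => (s + γ)⁻¹) h := by
    rw [he, cfc_mul (fun s : ℝ => s) _ h (by fun_prop) hci, cfc_id' ℝ h]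
  have he0 : 0 ≤ e := cfc_nonneg fun s h' => by have := hs s h'; positivity
  have he1 : e ≤ 1 := cfc_le_one _ _ fun s h' => by
    have := hs s h'
    rw [← div_eq_mul_inv, div_le_one (by positivity)]; linarith
  have hstar : star (1 - e) = 1 - e := (IsSelfAdjoint.of_nonneg (sub_nonneg.2 he1)).star_eq
  have hsub : 1 - e = cfc (fun s : ℝ => 1 - s * (s + γ)⁻¹) h := by
    rw [cfc_sub (fun _ => (1 : ℝ)) _ h (by fun_prop) hcs, cfc_const_one ℝ h]
  have hnorm : ‖(1 - e) * h * (1 - e)‖ ≤ γ := by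
    have : (1 - e) * h * (1 - e)
        = cfc (fun s : ℝ => (1 - s * (s + γ)⁻¹) * s * (1 - s * (s + γ)⁻¹)) h := by
      rw [cfc_mul _ _ h (by fun_prop) (by fun_prop), cfc_mul _ _ h (by fun_prop) (by fun_prop),
        cfc_id' ℝ h, ← hsub]
    rw [this]
    refine norm_cfc_le hγ0.le fun s h' => ?_
    have hs0 := hs s h'
    have h3 : 1 - s * (s + γ)⁻¹ = γ / (s + γ) := by field_simp [hne s h']; ring
    rw [h3, Real.norm_of_nonneg (by positivity)]
    have : γ / (s + γ) * s * (γ / (s + γ)) = γ * (γ / (s + γ) * (s / (s + γ))) := by ring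
    rw [this]
    refine mul_le_of_le_one_right hγ0.le (mul_le_one₀ ?_ (by positivity) ?_)
    · rw [div_le_one (by positivity)]; linarith
    · rw [div_le_one (by positivity)]; linarith
  have hle : ∀ p : B, 0 ≤ p → p ≤ h → ‖star (1 - e) * p * (1 - e)‖ ≤ δ * δ := by
    intro p hp hph
    refine (CStarAlgebra.norm_le_norm_of_nonneg_of_le (star_left_conjugate_nonneg hp (1 - e))
      (star_left_conjugate_le_conjugate hph (1 - e))).trans ?_
    rw [hstar, ← sq]; exact hnorm
  refine ⟨e, heq ▸ J.mul_mem_right _ _ hhJ, he0, he1, fun x hx => ?_⟩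
  have hxh : star x * x + x * star x ≤ h := Finset.single_le_sum hpos hx
  constructor
  · have := hle (x * star x) (mul_star_self_nonneg x)
      ((le_add_of_nonneg_left (star_mul_self_nonneg x)).trans hxh)
    have h4 : star (1 - e) * (x * star x) * (1 - e) = ((1 - e) * x) * star ((1 - e) * x) := by
      rw [star_mul, hstar]; simp only [mul_assoc]
    rw [h4, CStarRing.norm_self_mul_star] at this
    exact abs_le_of_sq_le_sq' (by nlinarith) hδ.le |>.2
  · have := hle (star x * x) (star_mul_self_nonneg x)
      ((le_add_of_nonneg_right (mul_star_self_nonneg x)).trans hxh)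
    have h4 : star (1 - e) * (star x * x) * (1 - e) = star (x * (1 - e)) * (x * (1 - e)) := by
      rw [star_mul]; simp only [mul_assoc]
    rw [h4, CStarRing.norm_star_mul_self] at this
    exact abs_le_of_sq_le_sq' (by nlinarith) hδ.le |>.2

/-- An approximate unit of an ideal, recorded as a filter on the ambient algebra. -/
structure IsApproxUnit (J : TwoSidedIdeal B) (l : Filter B) : Prop where
  neBot : l.NeBot
  mem : ∀ᶠ e in l, e ∈ J ∧ 0 ≤ e ∧ e ≤ 1
  left : ∀ g ∈ J, Tendsto (fun e => (1 - e) * g) l (𝓝 0)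
  right : ∀ g ∈ J, Tendsto (fun e => g * (1 - e)) l (𝓝 0)

lemma exists_isApproxUnit (J : TwoSidedIdeal B) : ∃ l : Filter B, IsApproxUnit J l := by
  classical
  have hex : ∀ p : Finset J × ℕ, ∃ e ∈ J, 0 ≤ e ∧ e ≤ 1 ∧
      ∀ x ∈ p.1, ‖(1 - e) * (x : B)‖ ≤ 1 / ((p.2 : ℝ) + 1)
        ∧ ‖(x : B) * (1 - e)‖ ≤ 1 / ((p.2 : ℝ) + 1) := by
    intro p
    obtain ⟨e, h1, h2, h3, h4⟩ := exists_local_unit J (p.1.image Subtype.val)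
      (fun x hx => by obtain ⟨y, _, rfl⟩ := Finset.mem_image.1 hx; exact y.2) (δ := 1 / ((p.2 : ℝ) + 1)) (by positivity)
    exact ⟨e, h1, h2, h3, fun x hx => h4 x (Finset.mem_image_of_mem _ hx)⟩
  choose e he using hex
  have hlim : Tendsto (fun p : Finset J × ℕ => 1 / ((p.2 : ℝ) + 1)) atTop (𝓝 0) := by
    rw [← prod_atTop_atTop_eq]
    exact tendsto_one_div_add_atTop_nhds_zero_nat.comp tendsto_snd
  have hev : ∀ g : J, ∀ᶠ p : Finset J × ℕ in atTop, g ∈ p.1 := by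
    intro g
    filter_upwards [eventually_ge_atTop (({g}, 0) : Finset J × ℕ)] with p hp
    exact hp.1 (by simp)
  refine ⟨map e atTop, inferInstance, ?_, fun g hg => ?_, fun g hg => ?_⟩
  · exact Eventually.of_forall (f := atTop) fun p => ⟨(he p).1, (he p).2.1, (he p).2.2.1⟩
  · rw [tendsto_map'_iff]
    refine squeeze_zero_norm' ?_ hlim
    filter_upwards [hev ⟨g, hg⟩] with p hp
    exact ((he p).2.2.2 _ hp).1
  · rw [tendsto_map'_iff]
    refine squeeze_zero_norm' ?_ hlim
    filter_upwards [hev ⟨g, hg⟩] with p hp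
    exact ((he p).2.2.2 _ hp).2

/-! ### Weak centrality of approximate units -/

lemma norm_add_smul_sq_le {B : Type*} [CStarAlgebra B] (g v : B) (c : ℂ) :
    ‖g + c • v‖ ^ 2 ≤ ‖g‖ ^ 2 + 2 * ‖c‖ * ‖star g * v‖ + ‖c‖ ^ 2 * ‖v‖ ^ 2 := by
  have h : star (g + c • v) * (g + c • v) = star g * g + c • (star g * v)
      + star (c • (star g * v)) + (star c * c) • (star v * v) := by
    simp only [star_add, star_smul, star_mul, star_star, add_mul, mul_add, smul_mul_assoc,
      mul_smul_comm]
    module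
  calc ‖g + c • v‖ ^ 2 = ‖star (g + c • v) * (g + c • v)‖ := by
        rw [CStarRing.norm_star_mul_self, sq]
    _ ≤ ‖star g * g‖ + ‖c • (star g * v)‖ + ‖star (c • (star g * v))‖
          + ‖(star c * c) • (star v * v)‖ := by
        rw [h]; exact norm_add₄_le
    _ = _ := by
        rw [norm_star, norm_smul, norm_smul, CStarRing.norm_star_mul_self,
          CStarRing.norm_star_mul_self, CStarRing.norm_star_mul_self (x := v)]
        ring

lemma norm_add_smul_sq_le' {B : Type*} [CStarAlgebra B] (g v : B) (c : ℂ) :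
    ‖g + c • v‖ ^ 2 ≤ ‖g‖ ^ 2 + 2 * ‖c‖ * ‖v * star g‖ + ‖c‖ ^ 2 * ‖v‖ ^ 2 := by
  have h := norm_add_smul_sq_le (star g) (star v) (star c)
  rw [← star_smul, ← star_add, star_star, norm_star, norm_star, norm_star, norm_star] at h
  have h2 : ‖g * star v‖ = ‖v * star g‖ := by
    rw [← norm_star, star_mul, star_star]
  rwa [h2] at h

/-- If `g` nearly norms `φ` on the ideal `J`, then `φ` is small at every `v ∈ J` that is nearly
orthogonal to `g`, in the sense that `‖g + c v‖² ≤ 1 + 2 |c| η + |c|² R²`. Indeed a large value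
`φ v` would make `φ` exceed its norm at `g + c v` for a small `c` of suitable phase. -/
lemma exists_norming {B : Type*} [CStarAlgebra B] (J : TwoSidedIdeal B) (φ : B →L[ℂ] ℂ)
    {κ : ℝ} (hκ : 0 < κ) (R : ℝ) :
    ∃ g ∈ J, ‖g‖ ≤ 1 ∧ ∃ η > 0, ∀ v ∈ J,
      (∀ c : ℂ, ‖g + c • v‖ ^ 2 ≤ 1 + 2 * ‖c‖ * η + ‖c‖ ^ 2 * R ^ 2) → ‖φ v‖ ≤ κ := by
  set S : Set ℝ := {s | ∃ x ∈ J, ‖x‖ ≤ 1 ∧ ‖φ x‖ = s} with hS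
  have hbdd : BddAbove S := by
    refine ⟨‖φ‖, ?_⟩
    rintro s ⟨x, -, hx, rfl⟩
    exact (φ.le_opNorm x).trans (mul_le_of_le_one_right (norm_nonneg _) hx)
  have hne : S.Nonempty := ⟨0, 0, J.zero_mem, by simp, by simp⟩
  set M := sSup S with hM
  have hM0 : 0 ≤ M := le_csSup hbdd ⟨0, J.zero_mem, by simp, by simp⟩
  have hMle : ∀ w ∈ J, ‖φ w‖ ≤ M * ‖w‖ := by
    intro w hw
    rcases eq_or_ne w 0 with rfl | h0
    · simp
    have hpos : 0 < ‖w‖ := norm_pos_iff.2 h0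
    have hmem : ‖φ (((‖w‖⁻¹ : ℝ) : ℂ) • w)‖ ∈ S :=
      ⟨_, smul_mem_ideal J _ hw, by rw [norm_smul]; simp [hpos.ne'], rfl⟩
    have := le_csSup hbdd hmem
    rw [map_smul, norm_smul] at this
    simp only [Complex.norm_real, norm_inv, norm_norm] at this
    rwa [inv_mul_le_iff₀ hpos, mul_comm] at this
  set τ : ℝ := κ / ((M + 1) * (R ^ 2 + 1)) with hτ
  have hτ0 : 0 < τ := by positivity
  have hτe : τ * ((M + 1) * (R ^ 2 + 1)) = κ := by rw [hτ]; field_simp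
  set η : ℝ := κ / (4 * (M + 1)) with hη
  have hη0 : 0 < η := by positivity
  have hηe : η * (M + 1) = κ / 4 := by rw [hη]; field_simp
  obtain ⟨s, ⟨g, hgJ, hg1, rfl⟩, hgs⟩ := exists_lt_of_lt_csSup hne
    (show M - τ * κ / 4 < sSup S by rw [← hM]; linarith [mul_pos hτ0 hκ])
  refine ⟨g, hgJ, hg1, η, hη0, fun v hv hgv => ?_⟩
  obtain ⟨c₁, hc₁, h₁⟩ := RCLike.exists_norm_eq_mul_self (φ g)
  obtain ⟨c₂, hc₂, h₂⟩ := RCLike.exists_norm_eq_mul_self (φ v)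
  have hc₁0 : c₁ ≠ 0 := by rintro rfl; simp at hc₁
  set c : ℂ := τ * c₂ / c₁ with hc
  have hcn : ‖c‖ = τ := by
    rw [hc, norm_div, norm_mul, hc₁, hc₂, Complex.norm_real, Real.norm_of_nonneg hτ0.le]; simp
  have hval : c₁ * φ (g + c • v) = ((‖φ g‖ + τ * ‖φ v‖ : ℝ) : ℂ) := by
    push_cast
    rw [map_add, map_smul, smul_eq_mul, hc]
    rw [show ((‖φ g‖ : ℝ) : ℂ) = c₁ * φ g from h₁, show ((‖φ v‖ : ℝ) : ℂ) = c₂ * φ v from h₂]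
    field_simp
  have hvaln : ‖φ (g + c • v)‖ = ‖φ g‖ + τ * ‖φ v‖ := by
    have := congrArg norm hval
    rw [norm_mul, hc₁, one_mul, Complex.norm_real, Real.norm_of_nonneg (by positivity)] at this
    exact this
  have hup := hMle _ (J.add_mem hgJ (smul_mem_ideal J c hv))
  have hn := hgv c
  rw [hcn] at hn
  have hw : ‖g + c • v‖ ≤ 1 + τ * η + τ ^ 2 * R ^ 2 / 2 := by
    refine abs_le_of_sq_le_sq' ?_ (by positivity) |>.2
    have : 0 ≤ (τ * η + τ ^ 2 * R ^ 2 / 2) ^ 2 := by positivity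
    nlinarith
  rw [hvaln] at hup
  have h3 : M * ‖g + c • v‖ ≤ M * (1 + τ * η + τ ^ 2 * R ^ 2 / 2) := by gcongr
  have h4 : τ * ‖φ v‖ ≤ τ * (κ / 4 + M * η + M * τ * R ^ 2 / 2) := by nlinarith
  have h5 := le_of_mul_le_mul_left h4 hτ0
  have h6 : M * τ * R ^ 2 ≤ κ := by
    rw [← hτe]
    nlinarith [mul_nonneg hτ0.le hM0, mul_nonneg hτ0.le (sq_nonneg R)]
  nlinarith

lemma norm_le_one_of_mem {e : B} (h0 : 0 ≤ e) (h1 : e ≤ 1) : ‖e‖ ≤ 1 ∧ ‖1 - e‖ ≤ 1 :=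
  ⟨(CStarAlgebra.norm_le_one_iff_of_nonneg e h0).2 h1,
    (CStarAlgebra.norm_le_one_iff_of_nonneg (1 - e) (sub_nonneg.2 h1)).2 (by simpa using h0)⟩

namespace IsApproxUnit

variable {J : TwoSidedIdeal B} {l : Filter B}

/-- A bounded functional satisfies `φ ((1 - e) y) → 0` uniformly for `y` in bounded subsets of the
ideal; here `y` may depend on `e`. -/
lemma tendsto_left (hl : IsApproxUnit J l) (φ : B →L[ℂ] ℂ) (y : B → B) (R : ℝ)
    (hy : ∀ᶠ e in l, y e ∈ J ∧ ‖y e‖ ≤ R) :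
    Tendsto (fun e => φ ((1 - e) * y e)) l (𝓝 0) := by
  rw [Metric.tendsto_nhds]
  intro ε hε
  obtain ⟨g, hgJ, hg1, η, hη, H⟩ := exists_norming J φ (half_pos hε) R
  have hsm : ∀ᶠ e in l, ‖(1 - e) * g‖ * R < η := by
    have := ((hl.left g hgJ).norm).mul_const R
    rw [norm_zero, zero_mul] at this
    exact this.eventually_lt_const hη
  filter_upwards [hl.mem, hy, hsm] with e ⟨heJ, h0, h1⟩ ⟨hyJ, hyR⟩ hse
  rw [dist_zero_right]
  refine (H _ (J.mul_mem_left _ _ hyJ) fun c => ?_).trans_lt (half_lt_self hε)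
  have hstar : star (1 - e) = 1 - e := (IsSelfAdjoint.of_nonneg (sub_nonneg.2 h1)).star_eq
  have hR : 0 ≤ R := (norm_nonneg _).trans hyR
  have k1 : ‖star g * ((1 - e) * y e)‖ ≤ η := by
    have : star g * ((1 - e) * y e) = star ((1 - e) * g) * y e := by
      rw [star_mul, hstar, mul_assoc]
    rw [this]
    calc _ ≤ ‖star ((1 - e) * g)‖ * ‖y e‖ := norm_mul_le _ _
      _ ≤ ‖(1 - e) * g‖ * R := by rw [norm_star]; gcongr
      _ ≤ η := hse.le
  have k2 : ‖(1 - e) * y e‖ ≤ R := (norm_mul_le _ _).trans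
    ((mul_le_of_le_one_left (norm_nonneg _) (norm_le_one_of_mem h0 h1).2).trans hyR)
  have k3 : ‖g‖ ^ 2 ≤ 1 := pow_le_one₀ (norm_nonneg _) hg1
  refine (norm_add_smul_sq_le g _ c).trans ?_
  gcongr

lemma tendsto_right (hl : IsApproxUnit J l) (φ : B →L[ℂ] ℂ) (y : B → B) (R : ℝ)
    (hy : ∀ᶠ e in l, y e ∈ J ∧ ‖y e‖ ≤ R) :
    Tendsto (fun e => φ (y e * (1 - e))) l (𝓝 0) := by
  rw [Metric.tendsto_nhds]
  intro ε hε
  obtain ⟨g, hgJ, hg1, η, hη, H⟩ := exists_norming J φ (half_pos hε) R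
  have hsm : ∀ᶠ e in l, R * ‖g * (1 - e)‖ < η := by
    have := ((hl.right g hgJ).norm).const_mul R
    rw [norm_zero, mul_zero] at this
    exact this.eventually_lt_const hη
  filter_upwards [hl.mem, hy, hsm] with e ⟨heJ, h0, h1⟩ ⟨hyJ, hyR⟩ hse
  rw [dist_zero_right]
  refine (H _ (J.mul_mem_right _ _ hyJ) fun c => ?_).trans_lt (half_lt_self hε)
  have hstar : star (1 - e) = 1 - e := (IsSelfAdjoint.of_nonneg (sub_nonneg.2 h1)).star_eq
  have hR : 0 ≤ R := (norm_nonneg _).trans hyR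
  have k1 : ‖y e * (1 - e) * star g‖ ≤ η := by
    have : y e * (1 - e) * star g = y e * star (g * (1 - e)) := by
      rw [star_mul, hstar, mul_assoc]
    rw [this]
    calc _ ≤ ‖y e‖ * ‖star (g * (1 - e))‖ := norm_mul_le _ _
      _ ≤ R * ‖g * (1 - e)‖ := by rw [norm_star]; gcongr
      _ ≤ η := hse.le
  have k2 : ‖y e * (1 - e)‖ ≤ R := (norm_mul_le _ _).trans
    ((mul_le_of_le_one_right (norm_nonneg _) (norm_le_one_of_mem h0 h1).2).trans hyR)
  have k3 : ‖g‖ ^ 2 ≤ 1 := pow_le_one₀ (norm_nonneg _) hg1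
  refine (norm_add_smul_sq_le' g _ c).trans ?_
  gcongr

lemma tendsto_off_diag (hl : IsApproxUnit J l) (φ : B →L[ℂ] ℂ) (a : B) :
    Tendsto (fun e => φ (e * a * (1 - e))) l (𝓝 0) := by
  refine hl.tendsto_right φ (fun e => e * a) ‖a‖ ?_
  filter_upwards [hl.mem] with e ⟨heJ, h0, h1⟩
  exact ⟨J.mul_mem_right _ _ heJ, (norm_mul_le _ _).trans
    (mul_le_of_le_one_left (norm_nonneg _) (norm_le_one_of_mem h0 h1).1)⟩

lemma tendsto_off_diag' (hl : IsApproxUnit J l) (φ : B →L[ℂ] ℂ) (a : B) :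
    Tendsto (fun e => φ ((1 - e) * (a * e))) l (𝓝 0) := by
  refine hl.tendsto_left φ (fun e => a * e) ‖a‖ ?_
  filter_upwards [hl.mem] with e ⟨heJ, h0, h1⟩
  exact ⟨J.mul_mem_left _ _ heJ, (norm_mul_le _ _).trans
    (mul_le_of_le_one_right (norm_nonneg _) (norm_le_one_of_mem h0 h1).1)⟩

/-- An approximate unit is asymptotically central in the weak topology. -/
lemma tendsto_commutator (hl : IsApproxUnit J l) (φ : B →L[ℂ] ℂ) (a : B) :
    Tendsto (fun e => φ (a * e - e * a)) l (𝓝 0) := by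
  have := (hl.tendsto_off_diag' φ a).sub (hl.tendsto_off_diag φ a)
  rw [sub_zero] at this
  refine this.congr fun e => ?_
  rw [← map_sub]
  congr 1
  noncomm_ring

end IsApproxUnit

/-! ### From weak to norm estimates -/

/-- A convex set that approaches `0` in the weak topology approaches it in norm. -/
lemma zero_mem_closure_of_weak {E : Type*} [NormedAddCommGroup E] [NormedSpace ℂ E] {S : Set E}
    (hS : Convex ℝ S) (h : ∀ Φ : E →L[ℂ] ℂ, ∀ s > 0, ∃ x ∈ S, ‖Φ x‖ < s) :
    (0 : E) ∈ closure S := by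
  by_contra h0
  obtain ⟨Φ, u, h1, h2⟩ := RCLike.geometric_hahn_banach_closed_point (𝕜 := ℂ)
    hS.closure isClosed_closure h0
  rw [map_zero, map_zero] at h2
  obtain ⟨x, hx, hxs⟩ := h Φ (-u) (by linarith)
  have h3 := h1 x (subset_closure hx)
  have h4 := (abs_le.1 (Complex.abs_re_le_norm (Φ x))).1
  have h5 : RCLike.re (Φ x) = (Φ x).re := rfl
  linarith

/-- A single element `e` of an ideal that nearly commutes with given coefficients and brings the
norm of `(1 - t e) z` down to nearly `r`, where `r` is attained modulo the ideal. The two demands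
hold weakly along any approximate unit, and the pairs of errors form a convex set. -/
lemma exists_quasicentral (J : TwoSidedIdeal B) {N : ℕ} (a : Fin N → B) (z y' : B) (hy' : y' ∈ J)
    {t r : ℝ} (ht1 : t ≤ 1) (hz : (1 - t) * ‖z‖ ≤ r) (hzy : ‖z - y'‖ ≤ r)
    {η : ℝ} (hη : 0 < η) :
    ∃ e ∈ J, 0 ≤ e ∧ e ≤ 1 ∧ (∀ i, ‖a i * e - e * a i‖ < η) ∧ ‖z - t • (e * z)‖ < r + η := by
  obtain ⟨l, hl⟩ := exists_isApproxUnit J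
  have := hl.neBot
  set S : Set ((Fin N → B) × B) := {p | ∃ e ∈ J, 0 ≤ e ∧ e ≤ 1 ∧ ∃ w : B, ‖w‖ ≤ r ∧
    p = (fun i => a i * e - e * a i, z - t • (e * z) - w)} with hSdef
  have hS : Convex ℝ S := by
    rintro _ ⟨e, heJ, h0, h1, w, hw, rfl⟩ _ ⟨e', heJ', h0', h1', w', hw', rfl⟩ α β hα hβ hαβ
    have hI := convex_Icc (𝕜 := ℝ) (0 : B) 1 ⟨h0, h1⟩ ⟨h0', h1'⟩ hα hβ hαβ
    have hW := convex_closedBall (0 : B) r (mem_closedBall_zero_iff.2 hw)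
      (mem_closedBall_zero_iff.2 hw') hα hβ hαβ
    refine ⟨α • e + β • e', J.add_mem ?_ ?_, hI.1, hI.2, α • w + β • w',
      mem_closedBall_zero_iff.1 hW, ?_⟩
    · exact smul_mem_ideal J (α : ℂ) heJ
    · exact smul_mem_ideal J (β : ℂ) heJ'
    · ext i
      · simp only [Prod.smul_mk, Prod.mk_add_mk, Pi.add_apply, Pi.smul_apply, mul_add, add_mul,
          mul_smul_comm, smul_mul_assoc, smul_sub]
        abel
      · obtain rfl : β = 1 - α := by linarith
        simp only [Prod.smul_mk, Prod.mk_add_mk, add_mul, smul_mul_assoc]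
        module
  have hmem : (0 : (Fin N → B) × B) ∈ closure S := by
    refine zero_mem_closure_of_weak hS fun Φ s hs => ?_
    set ψ : B →L[ℂ] ℂ := Φ.comp (ContinuousLinearMap.inr ℂ (Fin N → B) B) with hψ
    set χ : Fin N → (B →L[ℂ] ℂ) := fun i => (Φ.comp (ContinuousLinearMap.inl ℂ (Fin N → B) B)).comp
      (ContinuousLinearMap.single ℂ (fun _ => B) i) with hχ
    have hdec : ∀ (p : Fin N → B) (q : B), Φ (p, q) = ∑ i, χ i (p i) + ψ q := by
      intro p q
      have h1 : (p, q) = (p, (0 : B)) + ((0 : Fin N → B), q) := by simp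
      have h2 : ∑ i, χ i (p i)
          = Φ.comp (ContinuousLinearMap.inl ℂ (Fin N → B) B) (∑ i, Pi.single i (p i)) := by
        rw [map_sum]; rfl
      rw [h1, map_add, h2, Finset.univ_sum_single]; rfl
    -- the compression of `(1 - t) z` and `z - y'`, of norm at most `r`
    set w : B → B := fun e => e * ((1 - t) • z) * e + (1 - e) * (z - y') * (1 - e) with hw
    have hlim2 : Tendsto (fun e => ψ (z - t • (e * z) - w e)) l (𝓝 0) := by
      have k1 := (hl.tendsto_off_diag ψ ((1 - t) • z)).add (hl.tendsto_off_diag' ψ z)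
      have k2 : Tendsto (fun e => ψ ((1 - e) * (y' * (1 - e)))) l (𝓝 0) := by
        refine hl.tendsto_left ψ (fun e => y' * (1 - e)) ‖y'‖ ?_
        filter_upwards [hl.mem] with e ⟨heJ, h0, h1⟩
        exact ⟨J.mul_mem_right _ _ hy', (norm_mul_le _ _).trans
          (mul_le_of_le_one_right (norm_nonneg _) (norm_le_one_of_mem h0 h1).2)⟩
      have k3 := k1.add k2
      rw [add_zero, add_zero] at k3
      refine k3.congr fun e => ?_
      rw [← map_add, ← map_add]
      congr 1
      simp only [hw, sub_smul, one_smul, mul_sub, sub_mul, mul_one, one_mul, mul_smul_comm,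
        smul_mul_assoc, mul_assoc]
      abel
    have hlim : Tendsto (fun e => Φ (fun i => a i * e - e * a i, z - t • (e * z) - w e)) l
        (𝓝 0) := by
      have h1 := (tendsto_finsetSum Finset.univ
        fun i _ => hl.tendsto_commutator (χ i) (a i)).add hlim2
      simp only [Finset.sum_const_zero, add_zero] at h1
      exact h1.congr fun e => (hdec _ _).symm
    have hev : ∀ᶠ e in l, ‖Φ (fun i => a i * e - e * a i, z - t • (e * z) - w e)‖ < s := by
      have := hlim.norm
      rw [norm_zero] at this
      exact this.eventually_lt_const hs
    obtain ⟨e, ⟨heJ, h0, h1⟩, hes⟩ := (hl.mem.and hev).exists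
    refine ⟨_, ⟨e, heJ, h0, h1, w e, ?_, rfl⟩, hes⟩
    refine norm_conj_add_conj_le h0 h1 ?_ hzy
    rwa [norm_smul, Real.norm_of_nonneg (by linarith)]
  obtain ⟨_, ⟨e, heJ, h0, h1, w, hw, rfl⟩, hd⟩ := Metric.mem_closure_iff.1 hmem η hη
  rw [dist_zero_left] at hd
  refine ⟨e, heJ, h0, h1, fun i => ?_, ?_⟩
  · exact ((norm_le_pi_norm (fun i => a i * e - e * a i) i).trans
      (norm_fst_le ((fun i => a i * e - e * a i, z - t • (e * z) - w) :
        (Fin N → B) × B))).trans_lt hd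
  · have h2 : ‖z - t • (e * z) - w‖ < η := (norm_snd_le _).trans_lt hd
    have h3 := norm_add_le (z - t • (e * z) - w) w
    rw [sub_add_cancel] at h3
    linarith

end CStar

/-! ### Best approximation by successive improvement -/

/-- If every `z ∈ X` with a point of `Y` within `r` can be moved to distance nearly `r` from `0` by
some `y ∈ Y` of norm about `t ‖z‖`, where `(1 - t) ‖z‖ ≤ r`, then improving approximants
successively gives a Cauchy sequence in `Y` whose limit is a best approximation. -/
lemma exists_best_approx_of_step {A : Type*} [NormedAddCommGroup A] [CompleteSpace A]
    (X Y : AddSubgroup A) (hY : IsClosed (Y : Set A)) (hYX : Y ≤ X)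
    (step : ∀ z ∈ X, ∀ y' ∈ Y, ∀ t r : ℝ, 0 ≤ t → t ≤ 1 → (1 - t) * ‖z‖ ≤ r → ‖z - y'‖ ≤ r →
      ∀ η > 0, ∃ y ∈ Y, ‖y‖ ≤ t * ‖z‖ + η ∧ ‖z - y‖ ≤ r + η) :
    ∀ x ∈ X, ∃ y ∈ Y, ‖x - y‖ = Metric.infDist x (Y : Set A) := by
  intro x hx
  set d := Metric.infDist x (Y : Set A) with hd
  have hd0 : 0 ≤ d := Metric.infDist_nonneg
  have hne : (Y : Set A).Nonempty := ⟨0, Y.zero_mem⟩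
  have hnext : ∀ ε > 0, ∀ y₀ ∈ Y, ‖x - y₀‖ ≤ d + ε →
      ∃ y₁ ∈ Y, ‖x - y₁‖ ≤ d + ε / 2 ∧ ‖y₁ - y₀‖ ≤ 2 * ε := by
    intro ε hε y₀ hy₀ hxy
    obtain ⟨p, hp, hxp⟩ := (Metric.infDist_lt_iff hne (x := x)).1
      (show Metric.infDist x (Y : Set A) < d + ε / 4 by rw [← hd]; linarith)
    rw [dist_eq_norm] at hxp
    have hpos : 0 < d + ε := by linarith
    have ht0 : 0 ≤ ε / (d + ε) := by positivity
    have ht1 : ε / (d + ε) ≤ 1 := by rw [div_le_one hpos]; linarith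
    have htz : ε / (d + ε) * ‖x - y₀‖ ≤ ε :=
      calc ε / (d + ε) * ‖x - y₀‖ ≤ ε / (d + ε) * (d + ε) := by gcongr
        _ = ε := by field_simp
    have h1t : (1 - ε / (d + ε)) * ‖x - y₀‖ ≤ d + ε / 4 :=
      calc (1 - ε / (d + ε)) * ‖x - y₀‖ ≤ (1 - ε / (d + ε)) * (d + ε) := by
            have : 0 ≤ 1 - ε / (d + ε) := by linarith
            gcongr
        _ = d := by field_simp; ring
        _ ≤ d + ε / 4 := by linarith
    obtain ⟨y, hyY, hy1, hy2⟩ := step (x - y₀) (X.sub_mem hx (hYX hy₀)) (p - y₀)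
      (Y.sub_mem hp hy₀) (ε / (d + ε)) (d + ε / 4) ht0 ht1 h1t
      (by rw [sub_sub_sub_cancel_right]; exact hxp.le) (ε / 4) (by linarith)
    refine ⟨y₀ + y, Y.add_mem hy₀ hyY, ?_, ?_⟩
    · rw [← sub_sub]; linarith
    · rw [add_sub_cancel_left]; linarith
  choose! f hf using hnext
  obtain ⟨p, hp, hxp⟩ := (Metric.infDist_lt_iff hne (x := x)).1
      (show Metric.infDist x (Y : Set A) < d + 1 by rw [← hd]; linarith)
  rw [dist_eq_norm] at hxp
  let u : ℕ → A := fun n => Nat.rec p (fun n y => f ((1 / 2 : ℝ) ^ n) y) n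
  have hu : ∀ n, u n ∈ Y ∧ ‖x - u n‖ ≤ d + (1 / 2 : ℝ) ^ n := by
    intro n
    induction n with
    | zero => exact ⟨hp, by simpa [u] using hxp.le⟩
    | succ n ih =>
      obtain ⟨h1, h2, -⟩ := hf ((1 / 2 : ℝ) ^ n) (by positivity) (u n) ih.1 ih.2
      refine ⟨h1, ?_⟩
      rw [pow_succ, mul_one_div]
      exact h2
  have hc : CauchySeq u := by
    refine cauchySeq_of_le_geometric (1 / 2 : ℝ) 2 (by norm_num) fun n => ?_
    rw [dist_comm, dist_eq_norm]
    exact (hf ((1 / 2 : ℝ) ^ n) (by positivity) (u n) (hu n).1 (hu n).2).2.2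
  obtain ⟨y, hy⟩ := cauchySeq_tendsto_of_complete hc
  have hyY : y ∈ Y := hY.mem_of_tendsto hy (Eventually.of_forall fun n => (hu n).1)
  refine ⟨y, hyY, le_antisymm ?_ ?_⟩
  · have h1 : Tendsto (fun n => ‖x - u n‖) atTop (𝓝 ‖x - y‖) := (tendsto_const_nhds.sub hy).norm
    have h2 : Tendsto (fun n : ℕ => d + (1 / 2 : ℝ) ^ n) atTop (𝓝 (d + 0)) :=
      tendsto_const_nhds.add (tendsto_pow_atTop_nhds_zero_of_lt_one (by norm_num) (by norm_num))
    rw [add_zero] at h2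
    exact le_of_tendsto_of_tendsto' h1 h2 fun n => (hu n).2
  · rw [← dist_eq_norm]
    exact Metric.infDist_le_dist_of_mem hyY

/-! ### Passage to the unitization -/

section Unitization

variable {A : Type*} [NonUnitalCStarAlgebra A]

lemma unitization_mul_inr (b : Unitization ℂ A) (x : A) :
    b * (x : Unitization ℂ A) = ((b.fst • x + b.snd * x : A) : Unitization ℂ A) := by
  ext <;> simp

lemma inr_mul_unitization (b : Unitization ℂ A) (x : A) :
    (x : Unitization ℂ A) * b = ((b.fst • x + x * b.snd : A) : Unitization ℂ A) := by
  ext <;> simp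

/-- The image in the unitization of an ideal of `A` that is stable under scalars. -/
def unitizationIdeal (I : TwoSidedIdeal A) (hs : ∀ (c : ℂ), ∀ x ∈ I, c • x ∈ I) :
    TwoSidedIdeal (Unitization ℂ A) :=
  TwoSidedIdeal.mk' {b | ∃ x ∈ I, (x : Unitization ℂ A) = b}
    ⟨0, I.zero_mem, by simp⟩
    (by rintro _ _ ⟨x, hx, rfl⟩ ⟨y, hy, rfl⟩; exact ⟨x + y, I.add_mem hx hy, by simp⟩)
    (by rintro _ ⟨x, hx, rfl⟩; exact ⟨-x, I.neg_mem hx, by simp⟩)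
    (by
      rintro b _ ⟨x, hx, rfl⟩
      exact ⟨_, I.add_mem (hs _ _ hx) (I.mul_mem_left _ _ hx), (unitization_mul_inr b x).symm⟩)
    (by
      rintro _ b ⟨x, hx, rfl⟩
      exact ⟨_, I.add_mem (hs _ _ hx) (I.mul_mem_right _ _ hx), (inr_mul_unitization b x).symm⟩)

lemma mem_unitizationIdeal {I : TwoSidedIdeal A} {hs : ∀ (c : ℂ), ∀ x ∈ I, c • x ∈ I}
    {b : Unitization ℂ A} :
    b ∈ unitizationIdeal I hs ↔ ∃ x ∈ I, (x : Unitization ℂ A) = b := by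
  simp [unitizationIdeal]

/-- A closed ideal is stable under scalars, although a `TwoSidedIdeal` of a non-unital ring need
not be: `c x` is a limit of products `x (c u)` with `u` from an approximate unit of `A`. -/
lemma smul_mem_of_isClosed (I : TwoSidedIdeal A) (hI : IsClosed (I : Set A)) (c : ℂ) (x : A)
    (hx : x ∈ I) : c • x ∈ I := by
  let _ : PartialOrder (Unitization ℂ A) := CStarAlgebra.spectralOrder _
  have : StarOrderedRing (Unitization ℂ A) := CStarAlgebra.spectralOrderedRing _
  have hmem : c • x ∈ closure (I : Set A) := by
    rw [Metric.mem_closure_iff]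
    intro ε hε
    obtain ⟨e, heJ, -, -, he⟩ := exists_local_unit
      (unitizationIdeal (⊤ : TwoSidedIdeal A) fun _ _ _ => trivial) {(x : Unitization ℂ A)}
      (fun y hy => by
        rw [Finset.mem_singleton] at hy
        exact mem_unitizationIdeal.2 ⟨x, trivial, hy.symm⟩)
      (δ := ε / (2 * (‖c‖ + 1))) (by positivity)
    obtain ⟨u, -, rfl⟩ := mem_unitizationIdeal.1 heJ
    have h1 := (he _ (Finset.mem_singleton_self _)).2
    have h2 : (x : Unitization ℂ A) * (1 - (u : Unitization ℂ A))
        = ((x - x * u : A) : Unitization ℂ A) := by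
      rw [mul_sub, mul_one, Unitization.inr_sub, Unitization.inr_mul]
    rw [h2, Unitization.norm_inr] at h1
    refine ⟨x * (c • u), I.mul_mem_right _ _ hx, ?_⟩
    rw [dist_eq_norm, mul_smul_comm, ← smul_sub, norm_smul]
    calc ‖c‖ * ‖x - x * u‖ ≤ (‖c‖ + 1) * (ε / (2 * (‖c‖ + 1))) := by gcongr; linarith
      _ = ε / 2 := by field_simp
      _ < ε := half_lt_self hε
  rwa [hI.closure_eq] at hmem

end Unitization

/-- Let `A` be a C*-algebra, `I` a closed two-sided ideal of `A`, and
`T : A → A` an elementary operator, i.e. `T x = ∑ i, a i * x * b i` with coefficients in the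
minimal unitization `Unitization ℂ A`. Then the closure of `T '' I` is proximinal in the
closure of the range of `T`. -/
theorem stmt_0 {A : Type*} [NonUnitalCStarAlgebra A]
    (I : TwoSidedIdeal A) (hI : IsClosed (I : Set A))
    (N : ℕ) (a b : Fin N → Unitization ℂ A) (T : A → A)
    (hT : ∀ x : A, (T x : Unitization ℂ A) = ∑ i, a i * (x : Unitization ℂ A) * b i) :
    ∀ x ∈ closure (Set.range T), ∃ y ∈ closure (T '' (I : Set A)),
      ‖x - y‖ = Metric.infDist x (closure (T '' (I : Set A))) := by
  let _ : PartialOrder (Unitization ℂ A) := CStarAlgebra.spectralOrder _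
  have : StarOrderedRing (Unitization ℂ A) := CStarAlgebra.spectralOrderedRing _
  have hs := smul_mem_of_isClosed I hI
  set J := unitizationIdeal I hs with hJ
  have hJmem : ∀ x ∈ I, (x : Unitization ℂ A) ∈ J := fun x hx => mem_unitizationIdeal.2 ⟨x, hx, rfl⟩
  have hJmem' : ∀ x : A, (x : Unitization ℂ A) ∈ J → x ∈ I := by
    intro x hx
    obtain ⟨y, hy, hyx⟩ := mem_unitizationIdeal.1 hx
    rwa [← Unitization.inr_injective hyx]
  have hTadd : ∀ x y, T (x + y) = T x + T y := by
    intro x y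
    apply Unitization.inr_injective (R := ℂ)
    simp only [Unitization.inr_add, hT, mul_add, add_mul, Finset.sum_add_distrib]
  let Th : A →+ A := AddMonoidHom.mk' T hTadd
  let X : AddSubgroup A := Th.range.topologicalClosure
  let Y : AddSubgroup A := ((AddSubgroup.ofClass I).map Th).topologicalClosure
  have hTI : ∀ x ∈ I, T x ∈ I := by
    intro x hx
    apply hJmem'
    rw [hT]
    exact sum_mem fun i _ => J.mul_mem_right _ _ (J.mul_mem_left _ _ (hJmem x hx))
  have hYI : ∀ y ∈ Y, y ∈ I := by
    intro y hy
    refine closure_minimal ?_ hI hy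
    rintro _ ⟨x, hx, rfl⟩
    exact hTI x hx
  have hYX : Y ≤ X := by
    refine closure_mono ?_
    rintro _ ⟨x, -, rfl⟩
    exact ⟨x, rfl⟩
  have main := exists_best_approx_of_step X Y (AddSubgroup.isClosed_topologicalClosure _) hYX ?_
  · exact main
  intro z hz y' hy' t r ht0 ht1 htz hzy η hη
  obtain ⟨_, ⟨x₀, rfl⟩, hx₀⟩ := Metric.mem_closure_iff.1 hz (η / 4) (by linarith)
  change dist z (T x₀) < η / 4 at hx₀
  rw [dist_comm, dist_eq_norm] at hx₀
  set K : ℝ := ∑ i, ‖(x₀ : Unitization ℂ A) * b i‖ with hK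
  have hK0 : 0 ≤ K := Finset.sum_nonneg fun i _ => norm_nonneg _
  have hη' : 0 < η / (4 * (K + 1)) := by positivity
  obtain ⟨e, heJ, h0, h1, hcomm, hnorm⟩ := exists_quasicentral J a (z : Unitization ℂ A)
    (y' : Unitization ℂ A) (hJmem y' (hYI y' hy')) (t := t) (r := r) ht1
    (by rwa [Unitization.norm_inr]) (by rwa [← Unitization.inr_sub, Unitization.norm_inr]) hη'
  have he1 := (norm_le_one_of_mem h0 h1).1
  have hη4 : η / (4 * (K + 1)) ≤ η / 4 := by
    gcongr
    linarith
  have hKη : K * (η / (4 * (K + 1))) ≤ η / 4 :=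
    calc K * (η / (4 * (K + 1))) ≤ (K + 1) * (η / (4 * (K + 1))) := by gcongr; linarith
      _ = η / 4 := by field_simp
  obtain ⟨u, huI, hue⟩ := mem_unitizationIdeal.1 heJ
  set y : A := T ((t : ℂ) • (u * x₀)) with hy
  have hyY : y ∈ Y := subset_closure ⟨_, hs _ _ (I.mul_mem_right _ _ huI), rfl⟩
  -- `T (e x₀)` and `e T x₀` differ by commutators of `e` with the left coefficients only
  have hdiff : (y : Unitization ℂ A) - t • (e * (z : Unitization ℂ A))
      = t • (∑ i, (a i * e - e * a i) * ((x₀ : Unitization ℂ A) * b i)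
        + e * ((T x₀ - z : A) : Unitization ℂ A)) := by
    have h2 : (((t : ℂ) • (u * x₀) : A) : Unitization ℂ A) = t • (e * (x₀ : Unitization ℂ A)) := by
      rw [Unitization.inr_smul, Unitization.inr_mul, hue]; rfl
    rw [hy, hT, h2, Unitization.inr_sub, hT]
    simp only [mul_sub, sub_mul, Finset.sum_sub_distrib, Finset.mul_sum, mul_smul_comm,
      smul_mul_assoc, ← Finset.smul_sum, mul_assoc, ← smul_sub]
    congr 1
    abel
  have hsum : ‖∑ i, (a i * e - e * a i) * ((x₀ : Unitization ℂ A) * b i)‖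
      ≤ K * (η / (4 * (K + 1))) := by
    rw [hK, Finset.sum_mul]
    refine norm_sum_le_of_le _ fun i _ => (norm_mul_le _ _).trans ?_
    rw [mul_comm]
    exact mul_le_mul_of_nonneg_left (hcomm i).le (norm_nonneg _)
  have herr : ‖(y : Unitization ℂ A) - t • (e * (z : Unitization ℂ A))‖ ≤ η / 2 := by
    rw [hdiff, norm_smul, Real.norm_of_nonneg ht0]
    refine (mul_le_of_le_one_left (norm_nonneg _) ht1).trans ((norm_add_le _ _).trans ?_)
    have h3 : ‖e * ((T x₀ - z : A) : Unitization ℂ A)‖ ≤ ‖T x₀ - z‖ := by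
      refine (norm_mul_le _ _).trans ?_
      rw [Unitization.norm_inr]
      exact mul_le_of_le_one_left (norm_nonneg _) he1
    linarith
  have hte : ‖t • (e * (z : Unitization ℂ A))‖ ≤ t * ‖z‖ := by
    rw [norm_smul, Real.norm_of_nonneg ht0]
    refine mul_le_mul_of_nonneg_left ((norm_mul_le _ _).trans ?_) ht0
    rw [Unitization.norm_inr]
    exact mul_le_of_le_one_left (norm_nonneg _) he1
  refine ⟨y, hyY, ?_, ?_⟩
  · rw [← Unitization.norm_inr (𝕜 := ℂ) y]
    have := norm_add_le ((y : Unitization ℂ A) - t • (e * (z : Unitization ℂ A)))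
      (t • (e * (z : Unitization ℂ A)))
    rw [sub_add_cancel] at this
    linarith
  · rw [← Unitization.norm_inr (𝕜 := ℂ) (z - y), Unitization.inr_sub]
    have := norm_sub_le ((z : Unitization ℂ A) - t • (e * (z : Unitization ℂ A)))
      ((y : Unitization ℂ A) - t • (e * (z : Unitization ℂ A)))
    rw [sub_sub_sub_cancel_right] at this
    linarith
end

section
/- Let A be a C*-algebra, I a closed two-sided ideal of A, and T : A → A an elementary operator, i.e. T(x) = Σ_{i=1}^N a_i x b_i for some elements a_1,…,a_N, b_1,…,b_N of the minimal unitization of A. Let A_sa and I_sa denote the real Banach spaces of self-adjoint elements of A and of I, respectively. Then the closure of T(I_sa) is proximinal in the closure of T(A_sa): for every x in the closure of T(A_sa) there exists y in the closure of T(I_sa) such that ‖x − y‖ = dist(x, closure(T(I_sa))). -/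
/-!
Write `X` and `Y` for the closures of `T(A_sa)` and `T(I_sa)`. Proximinality follows from a
relaxed one-and-a-half-ball property: if `x ∈ X`, `y₀ ∈ Y` and `‖x‖ ≤ ‖x - y₀‖ + ε`, then some
`y ∈ Y` satisfies, up to an arbitrarily small error, `‖y‖ ≤ ε` and `‖x - y‖ ≤ ‖x - y₀‖`.
Iterating it produces a convergent series of corrections whose sum is a best approximation
(`exists_best_approx`).

To find `y`, work in the unitization. Let `u, v` be self-adjoint with `u² + v² = 1`, `u` in the
ideal, both almost commuting with `x` and with the coefficients of `T`, and `v y₀ ≈ 0`. For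
`x = T h`, put `y = α T(u h u) ≈ α u x u`, which lies in `T(I_sa)`. Then
`x - y ≈ u ((1 - α) x) u + v (x - y₀) v`, whose norm is at most
`max ((1 - α) ‖x‖) ‖x - y₀‖` (`norm_conj_add_conj_le`), and `α = ε / (‖x - y₀‖ + ε)` gives both
bounds (`exists_compression`).

The pair `u, v` comes from a quasi-central approximate unit `e` by the rational parametrization
`u = 2e / (1 + e²)`, `v = (1 - e²) / (1 + e²)` of the circle, for which commutators are controlled
by those of `e` (`exists_circle_pair`). Quasi-centrality is obtained from an ordinary approximate
unit by Hahn–Banach separation (`exists_quasicentral`); the weak convergence of commutators that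
this needs rests on the fact that every bounded functional is, on the ideal, almost concentrated
on some element of the ideal (`exists_functional_concentrated`).
-/

namespace ElemProx

/-! ### Norm inequalities and approximate units -/

/-- The inequality `‖r c‖² ≤ ‖r r*‖ ‖c* c‖` for a row `r = (x, z)` and a column `c = (u, v)`; it is
Cauchy–Schwarz in the Hilbert module `B × B`. -/

theorem norm_row_mul_col_sq_le {B : Type*} [CStarAlgebra B] (x z u v : B) :
    ‖x * u + z * v‖ ^ 2 ≤ ‖x * star x + z * star z‖ * ‖star u * u + star v * v‖ := by
  let _ := CStarAlgebra.spectralOrder B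
  have _ := CStarAlgebra.spectralOrderedRing B
  let X : WithCStarModule B (B × B) := (WithCStarModule.equiv B (B × B)).symm (star u, star v)
  let Y : WithCStarModule B (B × B) := (WithCStarModule.equiv B (B × B)).symm (x, z)
  have h := CStarModule.norm_inner_le (A := B) (WithCStarModule B (B × B)) (x := X) (y := Y)
  have hX : ‖X‖ ^ 2 = ‖star u * u + star v * v‖ := by
    rw [WithCStarModule.prod_norm_sq]
    simp [X, WithCStarModule.inner_def]
  have hY : ‖Y‖ ^ 2 = ‖x * star x + z * star z‖ := by
    rw [WithCStarModule.prod_norm_sq]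
    simp [Y, WithCStarModule.inner_def]
  have hXY : inner B X Y = x * u + z * v := by
    rw [WithCStarModule.prod_inner]
    simp [X, Y, WithCStarModule.inner_def]
  rw [← hX, ← hY, ← hXY, ← mul_pow, mul_comm]
  gcongr

/-- `(p, q) ↦ u p u + v q v` is contractive for the maximum norm when `u² + v² = 1`. -/
theorem norm_conj_add_conj_le {B : Type*} [CStarAlgebra B] {u v : B} (hu : IsSelfAdjoint u)
    (hv : IsSelfAdjoint v) (huv : u * u + v * v = 1) (p q : B) :
    ‖u * p * u + v * q * v‖ ≤ max ‖p‖ ‖q‖ := by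
  nontriviality B
  let _ := CStarAlgebra.spectralOrder B
  have _ := CStarAlgebra.spectralOrderedRing B
  set M := max ‖p‖ ‖q‖
  have hM : 0 ≤ M := (norm_nonneg p).trans (le_max_left _ _)
  have key : ∀ w r : B, IsSelfAdjoint w → ‖r‖ ≤ M →
      star (r * w) * (r * w) ≤ M ^ 2 • (w * w) := fun w r hw hr => by
    have h1 : star r * r ≤ algebraMap ℝ B (M ^ 2) := by
      refine (CStarAlgebra.star_mul_le_algebraMap_norm_sq).trans ?_
      exact algebraMap_le_algebraMap.2 (by gcongr)
    have h2 := star_left_conjugate_le_conjugate h1 w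
    rw [hw.star_eq] at h2
    rw [star_mul, hw.star_eq]
    convert h2 using 1
    · noncomm_ring
    · rw [Algebra.algebraMap_eq_smul_one]; simp
  have h := norm_row_mul_col_sq_le u v (p * u) (q * v)
  rw [hu.star_eq, hv.star_eq, huv, norm_one, one_mul] at h
  have h3 : ‖star (p * u) * (p * u) + star (q * v) * (q * v)‖ ≤ M ^ 2 := by
    have := CStarAlgebra.norm_le_norm_of_nonneg_of_le
      (add_nonneg (star_mul_self_nonneg (p * u)) (star_mul_self_nonneg (q * v)))
      (add_le_add (key u p hu (le_max_left _ _)) (key v q hv (le_max_right _ _)))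
    rw [← smul_add, huv, norm_smul, norm_one, mul_one] at this
    simpa using this
  have := h.trans h3
  rw [← mul_assoc, ← mul_assoc] at this
  exact (pow_le_pow_iff_left₀ (norm_nonneg _) hM two_ne_zero).1 this

/-- A two-sided ideal, closed or not, has approximate units: for finitely many `x` in it, with
`h = ∑ (x* x + x x*)`, the element `e = h (ε² + h)⁻¹` works, since `(1 - e) h (1 - e) ≤ ε²`. -/
theorem exists_approx_unit {B : Type*} [CStarAlgebra B] (J : TwoSidedIdeal B) (F : Finset B)
    (hF : ∀ x ∈ F, x ∈ J) {ε : ℝ} (hε : 0 < ε) :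
    ∃ e ∈ J, IsSelfAdjoint e ∧ ‖e‖ ≤ 1 ∧ ∀ x ∈ F, ‖x - x * e‖ ≤ ε ∧ ‖x - e * x‖ ≤ ε := by
  let _ := CStarAlgebra.spectralOrder B
  have _ := CStarAlgebra.spectralOrderedRing B
  set h : B := ∑ x ∈ F, (star x * x + x * star x) with hh
  have hx0 : ∀ x : B, 0 ≤ star x * x + x * star x := fun x =>
    add_nonneg (star_mul_self_nonneg x) (mul_star_self_nonneg x)
  have h0 : 0 ≤ h := Finset.sum_nonneg fun x _ => hx0 x
  have hsa : IsSelfAdjoint h := h0.isSelfAdjoint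
  have hJ : h ∈ J := by
    refine sum_mem fun x hx => ?_
    exact J.add_mem (J.mul_mem_left _ _ (hF x hx)) (J.mul_mem_right _ _ (hF x hx))
  have hsp : ∀ t ∈ spectrum ℝ h, 0 ≤ t := fun t ht => spectrum_nonneg_of_nonneg h0 ht
  have hc : 0 < ε ^ 2 := by positivity
  have hcont : ContinuousOn (fun t : ℝ => (ε ^ 2 + t)⁻¹) (spectrum ℝ h) := by
    refine ContinuousOn.inv₀ (by fun_prop) fun t ht => ?_
    have := hsp t ht
    positivity
  have hcont0 : ContinuousOn (fun t : ℝ => t) (spectrum ℝ h) := continuousOn_id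
  have hcont2 : ContinuousOn (fun t : ℝ => t * (ε ^ 2 + t)⁻¹) (spectrum ℝ h) :=
    continuousOn_id.mul hcont
  have hcont3 : ContinuousOn (fun t : ℝ => 1 - t * (ε ^ 2 + t)⁻¹) (spectrum ℝ h) :=
    continuousOn_const.sub hcont2
  set e : B := cfc (fun t : ℝ => t * (ε ^ 2 + t)⁻¹) h with he
  have hesa : IsSelfAdjoint e := cfc_predicate _ _
  have h1e : 1 - e = cfc (fun t : ℝ => 1 - t * (ε ^ 2 + t)⁻¹) h := by
    rw [cfc_sub _ _ h continuousOn_const hcont2, cfc_const_one ℝ h]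
  have hconj : ‖(1 - e) * h * (1 - e)‖ ≤ ε ^ 2 := by
    have : (1 - e) * h * (1 - e) = cfc (fun t : ℝ => (1 - t * (ε ^ 2 + t)⁻¹) * t *
        (1 - t * (ε ^ 2 + t)⁻¹)) h := by
      have hcont4 : ContinuousOn (fun t : ℝ => (1 - t * (ε ^ 2 + t)⁻¹) * t) (spectrum ℝ h) :=
        hcont3.mul hcont0
      rw [cfc_mul _ _ h hcont4 hcont3, cfc_mul _ _ h hcont3 hcont0, ← h1e, cfc_id' ℝ h]
    rw [this]
    refine norm_cfc_le hc.le fun t ht => ?_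
    have ht := hsp t ht
    have h1 : 1 - t * (ε ^ 2 + t)⁻¹ = ε ^ 2 / (ε ^ 2 + t) := by field_simp; ring
    rw [h1, Real.norm_of_nonneg (by positivity)]
    rw [show ε ^ 2 / (ε ^ 2 + t) * t * (ε ^ 2 / (ε ^ 2 + t))
      = ε ^ 2 * (ε ^ 2 * t / (ε ^ 2 + t) ^ 2) by field_simp]
    refine mul_le_of_le_one_right hc.le ((div_le_one (by positivity)).2 ?_)
    nlinarith
  have hle : ∀ y : B, star y * y ≤ h → ‖y - y * e‖ ≤ ε := fun y hy => by
    have h2 := star_left_conjugate_le_conjugate hy (1 - e)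
    have hs : star (1 - e) = 1 - e := by simp [hesa.star_eq]
    have h3 := CStarAlgebra.norm_le_norm_of_nonneg_of_le
      (star_left_conjugate_nonneg (star_mul_self_nonneg y) (1 - e)) h2
    rw [hs] at h3
    have h4 : (1 - e) * (star y * y) * (1 - e) = star (y - y * e) * (y - y * e) := by
      simp only [star_sub, star_mul, hesa.star_eq]; noncomm_ring
    rw [h4, CStarRing.norm_star_mul_self, ← pow_two] at h3
    exact (pow_le_pow_iff_left₀ (norm_nonneg _) hε.le two_ne_zero).1 (h3.trans hconj)
  have hsum : ∀ x ∈ F, star x * x + x * star x ≤ h := fun x hx =>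
    Finset.single_le_sum (f := fun x : B => star x * x + x * star x) (fun x _ => hx0 x) hx
  refine ⟨e, ?_, hesa, ?_, fun x hx => ⟨hle x ?_, ?_⟩⟩
  · rw [he, cfc_mul _ _ h hcont0 hcont, cfc_id' ℝ h]
    exact J.mul_mem_right _ _ hJ
  · refine norm_cfc_le zero_le_one fun t ht => ?_
    have ht := hsp t ht
    rw [Real.norm_of_nonneg (by positivity), ← div_eq_mul_inv]
    exact (div_le_one (by positivity)).2 (by linarith)
  · exact (le_add_of_nonneg_right (mul_star_self_nonneg x)).trans (hsum x hx)
  · rw [← norm_star]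
    have := hle (star x) (by
      rw [star_star]
      exact (le_add_of_nonneg_left (star_mul_self_nonneg x)).trans (hsum x hx))
    simpa [hesa.star_eq] using this

/-- The pair `u = 2e / (1 + e²)`, `v = (1 - e²) / (1 + e²) = 2 / (1 + e²) - 1` attached to a
self-adjoint contraction `e` of the ideal. With `w = (1 + e²)⁻¹`, the commutator bounds come from
`[w, c] = -w [e², c] w` and `‖w‖ ≤ 1`, while `v = w (1 + e) (1 - e)` and `1 - u = (1 - e)² w` give
the last two estimates. -/
theorem exists_circle_pair {B : Type*} [CStarAlgebra B] (J : TwoSidedIdeal B) {e : B} (heJ : e ∈ J)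
    (he : IsSelfAdjoint e) (he1 : ‖e‖ ≤ 1) :
    ∃ u v : B, u ∈ J ∧ 1 - v ∈ J ∧ IsSelfAdjoint u ∧ IsSelfAdjoint v ∧ u * u + v * v = 1 ∧
      ‖u‖ ≤ 1 ∧ ‖v‖ ≤ 1 ∧
      (∀ c : B, ‖u * c - c * u‖ ≤ 6 * ‖e * c - c * e‖) ∧
      (∀ c : B, ‖v * c - c * v‖ ≤ 6 * ‖e * c - c * e‖) ∧
      (∀ y : B, ‖v * y‖ ≤ 2 * ‖y - e * y‖) ∧
      (∀ y : B, ‖y - y * u‖ ≤ 2 * ‖y - y * e‖) := by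
  have one_le : ‖(1 : B)‖ ≤ 1 := by
    rcases subsingleton_or_nontrivial B with h | h
    · simp [Subsingleton.elim (1 : B) 0]
    · simp
  have hpos : ∀ t : ℝ, 1 + t * t ≠ 0 := fun t => by nlinarith [mul_self_nonneg t]
  have hcont : Continuous (fun t : ℝ => (1 + t * t)⁻¹) :=
    Continuous.inv₀ (by fun_prop) hpos
  obtain ⟨w, hwsa, hw1, hinv, hinv'⟩ : ∃ w : B, IsSelfAdjoint w ∧ ‖w‖ ≤ 1 ∧
      w + e * e * w = 1 ∧ w + w * e * e = 1 := by
    refine ⟨cfc (fun t : ℝ => (1 + t * t)⁻¹) e, cfc_predicate _ _, ?_, ?_⟩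
    · refine norm_cfc_le zero_le_one fun t _ => ?_
      have := mul_self_nonneg t
      rw [Real.norm_of_nonneg (by positivity)]
      exact inv_le_one_of_one_le₀ (by nlinarith)
    set w : B := cfc (fun t : ℝ => (1 + t * t)⁻¹) e with hw
    have h1 : cfc (fun t : ℝ => 1 + t * t) e = 1 + e * e := by
      rw [cfc_add (a := e) (fun _ : ℝ => (1 : ℝ)) (fun t : ℝ => t * t) (by fun_prop) (by fun_prop),
        cfc_const_one ℝ e,
        cfc_mul (fun t : ℝ => t) (fun t : ℝ => t) e (by fun_prop) (by fun_prop), cfc_id' ℝ e]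
    have h2 : (1 + e * e) * w = 1 := by
      rw [← h1, hw, ← cfc_mul _ _ e (by fun_prop) hcont.continuousOn, ← cfc_const_one ℝ e]
      exact cfc_congr fun t _ => mul_inv_cancel₀ (hpos t)
    have h3 : w * (1 + e * e) = 1 := by
      rw [← h1, hw, ← cfc_mul _ _ e hcont.continuousOn (by fun_prop), ← cfc_const_one ℝ e]
      exact cfc_congr fun t _ => inv_mul_cancel₀ (hpos t)
    constructor
    · rw [← h2]; noncomm_ring
    · rw [← h3]; noncomm_ring
  have hew : e * w = w * e :=
    calc e * w = (w + w * e * e) * (e * w) := by rw [hinv', one_mul]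
      _ = w * e * (w + e * e * w) := by noncomm_ring
      _ = w * e := by rw [hinv, mul_one]
  have hwc : ∀ c : B, ‖w * c - c * w‖ ≤ 2 * ‖e * c - c * e‖ := fun c => by
    set k := e * c - c * e with hk
    have : w * c - c * w = -(w * (k * e + e * k) * w) :=
      calc w * c - c * w = w * c * (w + e * e * w) - (w + w * e * e) * c * w := by
            rw [hinv, hinv']; simp
        _ = -(w * (k * e + e * k) * w) := by rw [hk]; noncomm_ring
    rw [this, norm_neg]
    calc ‖w * (k * e + e * k) * w‖ ≤ ‖w‖ * (‖k‖ * ‖e‖ + ‖e‖ * ‖k‖) * ‖w‖ := by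
          refine (norm_mul_le _ _).trans ?_
          gcongr
          refine (norm_mul_le _ _).trans ?_
          gcongr
          exact (norm_add_le _ _).trans (add_le_add (norm_mul_le _ _) (norm_mul_le _ _))
      _ ≤ 1 * (‖k‖ * 1 + 1 * ‖k‖) * 1 := by gcongr
      _ = 2 * ‖k‖ := by ring
  have huv : (2 * (e * w)) * (2 * (e * w)) + (2 * w - 1) * (2 * w - 1) = (1 : B) :=
    calc (2 * (e * w)) * (2 * (e * w)) + (2 * w - 1) * (2 * w - 1)
        = 4 * (e * (w * e) * w) + 4 * (w * w) - 4 * w + 1 := by noncomm_ring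
      _ = 4 * ((w + e * e * w) * w) - 4 * w + 1 := by rw [← hew]; noncomm_ring
      _ = 1 := by rw [hinv]; noncomm_ring
  have husa : IsSelfAdjoint (2 * (e * w)) := by
    simp [IsSelfAdjoint, he.star_eq, hwsa.star_eq, hew, two_mul]
  have hvsa : IsSelfAdjoint (2 * w - 1) := by
    simp [IsSelfAdjoint, hwsa.star_eq, two_mul]
  have sq_le : ∀ x : B, IsSelfAdjoint x → ‖x * x‖ ≤ 1 → ‖x‖ ≤ 1 := fun x hx h => by
    have h1 := CStarRing.norm_star_mul_self (x := x)
    rw [hx.star_eq] at h1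
    nlinarith [norm_nonneg x]
  refine ⟨2 * (e * w), 2 * w - 1, ?_, ?_, husa, hvsa, huv, ?_, ?_, ?_, ?_, ?_, ?_⟩
  · exact J.mul_mem_left _ _ (J.mul_mem_right _ _ heJ)
  · have : 1 - (2 * w - 1) = 2 * (e * (e * w)) := by
      calc 1 - (2 * w - 1) = 2 * (w + e * e * w) - 2 * w := by rw [hinv]; noncomm_ring
        _ = _ := by noncomm_ring
    rw [this]
    exact J.mul_mem_left _ _ (J.mul_mem_right _ _ heJ)
  · refine sq_le _ husa ?_
    have := norm_conj_add_conj_le husa hvsa huv 1 0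
    simpa using this.trans (max_le one_le (by simp))
  · refine sq_le _ hvsa ?_
    have := norm_conj_add_conj_le husa hvsa huv 0 1
    simpa using this.trans (max_le (by simp) one_le)
  · intro c
    have : 2 * (e * w) * c - c * (2 * (e * w)) =
        (2 : ℝ) • (e * (w * c - c * w) + (e * c - c * e) * w) := by
      rw [two_smul]; noncomm_ring
    rw [this, norm_smul, Real.norm_two]
    have h2 := hwc c
    calc 2 * ‖e * (w * c - c * w) + (e * c - c * e) * w‖
        ≤ 2 * (‖e‖ * ‖w * c - c * w‖ + ‖e * c - c * e‖ * ‖w‖) := by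
          gcongr
          exact (norm_add_le _ _).trans (add_le_add (norm_mul_le _ _) (norm_mul_le _ _))
      _ ≤ 2 * (1 * (2 * ‖e * c - c * e‖) + ‖e * c - c * e‖ * 1) := by gcongr
      _ = 6 * ‖e * c - c * e‖ := by ring
  · intro c
    have : (2 * w - 1) * c - c * (2 * w - 1) = (2 : ℝ) • (w * c - c * w) := by
      rw [two_smul]; noncomm_ring
    rw [this, norm_smul, Real.norm_two]
    linarith [hwc c, norm_nonneg (e * c - c * e)]
  · intro y
    have : (2 * w - 1) * y = w * ((y - e * y) + e * (y - e * y)) := by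
      calc (2 * w - 1) * y = (2 * w - (w + w * e * e)) * y := by rw [hinv']
        _ = _ := by noncomm_ring
    rw [this]
    calc ‖w * ((y - e * y) + e * (y - e * y))‖
        ≤ ‖w‖ * (‖y - e * y‖ + ‖e‖ * ‖y - e * y‖) := by
          refine (norm_mul_le _ _).trans ?_
          gcongr
          exact (norm_add_le _ _).trans (by gcongr; exact norm_mul_le _ _)
      _ ≤ 1 * (‖y - e * y‖ + 1 * ‖y - e * y‖) := by gcongr
      _ = _ := by ring
  · intro y
    have : y - y * (2 * (e * w)) = ((y - y * e) - (y - y * e) * e) * w := by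
      calc y - y * (2 * (e * w)) = y * (w + e * e * w) - y * (2 * (e * w)) := by
            rw [hinv, mul_one]
        _ = _ := by noncomm_ring
    rw [this]
    calc ‖((y - y * e) - (y - y * e) * e) * w‖
        ≤ (‖y - y * e‖ + ‖y - y * e‖ * ‖e‖) * ‖w‖ := by
          refine (norm_mul_le _ _).trans ?_
          gcongr
          exact (norm_sub_le _ _).trans (by gcongr; exact norm_mul_le _ _)
      _ ≤ (‖y - y * e‖ + ‖y - y * e‖ * 1) * 1 := by gcongr
      _ = _ := by ring

/-! ### Quasi-central approximate units -/

theorem smul_mem_ideal {B : Type*} [CStarAlgebra B] (J : TwoSidedIdeal B) (r : ℝ) {x : B}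
    (hx : x ∈ J) : r • x ∈ J := by
  simpa using J.mul_mem_left (r • (1 : B)) x hx

/-- A bounded real functional is nearly carried by some `p ∈ J`, in the sense that
`z ↦ f (z (1 - p))` has small norm on `J`. Take `x` in the unit ball of `J` almost norming `f`
there and a circle pair with `x u ≈ x`. As `‖x u + δ z v‖ ≤ √(1 + δ²)` for `‖z‖ ≤ 1`, the term
`δ f (z v)` is `O(δ²)`, so `p = 1 - v` works. -/
theorem exists_functional_concentrated {B : Type*} [CStarAlgebra B] (J : TwoSidedIdeal B)
    (f : StrongDual ℝ B) {η : ℝ} (hη : 0 < η) :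
    ∃ p ∈ J, ∀ z ∈ J, |f (z - z * p)| ≤ η * ‖z‖ := by
  have hbdd : BddAbove (f '' {z | z ∈ J ∧ ‖z‖ ≤ 1}) := by
    refine ⟨‖f‖, ?_⟩
    rintro _ ⟨z, ⟨-, hz⟩, rfl⟩
    exact (le_abs_self _).trans ((f.le_opNorm z).trans (mul_le_of_le_one_right (norm_nonneg _) hz))
  set s := sSup (f '' {z | z ∈ J ∧ ‖z‖ ≤ 1}) with hs
  have hne : (f '' {z | z ∈ J ∧ ‖z‖ ≤ 1}).Nonempty := ⟨f 0, 0, ⟨J.zero_mem, by simp⟩, rfl⟩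
  have hs0 : 0 ≤ s := le_csSup hbdd ⟨0, ⟨J.zero_mem, by simp⟩, by simp⟩
  have hsf : s ≤ ‖f‖ := by
    refine csSup_le hne ?_
    rintro _ ⟨z, ⟨-, hz⟩, rfl⟩
    exact (le_abs_self _).trans ((f.le_opNorm z).trans (mul_le_of_le_one_right (norm_nonneg _) hz))
  have hscale : ∀ z ∈ J, ∀ r : ℝ, 0 < r → ‖z‖ ≤ r → f z ≤ s * r := fun z hz r hr hzr => by
    have h1 : f (r⁻¹ • z) ≤ s := le_csSup hbdd ⟨r⁻¹ • z, ⟨smul_mem_ideal J _ hz, by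
      rw [norm_smul, norm_inv, Real.norm_of_nonneg hr.le]
      exact (inv_mul_le_one₀ hr).2 hzr⟩, rfl⟩
    rw [map_smul, smul_eq_mul, inv_mul_le_iff₀ hr] at h1
    linarith
  set K := ‖f‖ + 1 with hK
  have hKpos : 0 < K := by positivity
  set δ := η / K with hδ
  have hδpos : 0 < δ := by positivity
  obtain ⟨_, ⟨x, ⟨hxJ, hx1⟩, rfl⟩, hfx⟩ := exists_lt_of_lt_csSup hne
    (show s - δ ^ 2 / 2 < s by linarith [pow_pos hδpos 2])
  obtain ⟨e, heJ, hesa, he1, hex⟩ := exists_approx_unit J {x} (by simpa using hxJ)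
    (show 0 < δ ^ 2 / (4 * K) by positivity)
  obtain ⟨u, v, huJ, hvJ, husa, hvsa, huv, -, -, -, -, -, hyu⟩ := exists_circle_pair J heJ hesa he1
  have hfxu : s - δ ^ 2 ≤ f (x * u) := by
    have h1 : ‖x - x * u‖ ≤ δ ^ 2 / (2 * K) := by
      refine (hyu x).trans ?_
      have := (hex x (by simp)).1
      calc 2 * ‖x - x * e‖ ≤ 2 * (δ ^ 2 / (4 * K)) := by gcongr
        _ = _ := by field_simp; norm_num
    have h2 : f (x - x * u) ≤ δ ^ 2 / 2 := by
      calc f (x - x * u) ≤ ‖f‖ * ‖x - x * u‖ := (le_abs_self _).trans (f.le_opNorm _)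
        _ ≤ K * (δ ^ 2 / (2 * K)) := by gcongr; linarith
        _ = _ := by field_simp
    rw [map_sub] at h2
    linarith
  have key : ∀ z ∈ J, ‖z‖ ≤ 1 → f (z * v) ≤ η := fun z hz hz1 => by
    have h1 := norm_row_mul_col_sq_le x (δ • z) u v
    have h2 : ‖x * star x + (δ • z) * star (δ • z)‖ ≤ 1 + δ ^ 2 := by
      refine (norm_add_le _ _).trans ?_
      rw [CStarRing.norm_self_mul_star, CStarRing.norm_self_mul_star, norm_smul,
        Real.norm_of_nonneg hδpos.le]
      have : ‖x‖ * ‖x‖ ≤ 1 := by nlinarith [norm_nonneg x]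
      have : ‖z‖ * ‖z‖ ≤ 1 := by nlinarith [norm_nonneg z]
      nlinarith [pow_pos hδpos 2]
    have h3 : ‖star u * u + star v * v‖ ≤ 1 := by
      rw [husa.star_eq, hvsa.star_eq, huv]
      rcases subsingleton_or_nontrivial B with h | h
      · simp [Subsingleton.elim (1 : B) 0]
      · simp
    have h4 : ‖x * u + (δ • z) * v‖ ≤ 1 + δ ^ 2 := by
      have h5 : ‖x * u + (δ • z) * v‖ ^ 2 ≤ (1 + δ ^ 2) ^ 2 := by
        refine h1.trans ((mul_le_mul h2 h3 (norm_nonneg _) (by positivity)).trans ?_)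
        nlinarith [pow_pos hδpos 2]
      exact (pow_le_pow_iff_left₀ (norm_nonneg _) (by positivity) two_ne_zero).1 h5
    have h6 := hscale _ (J.add_mem (J.mul_mem_right _ u hxJ)
      (J.mul_mem_right _ v (smul_mem_ideal J δ hz))) _ (by positivity) h4
    rw [map_add, smul_mul_assoc, map_smul, smul_eq_mul] at h6
    have h7 : δ * f (z * v) ≤ δ * η := by
      have h8 : δ * K = η := by rw [hδ]; field_simp
      rw [← h8]
      nlinarith [pow_pos hδpos 2]
    exact le_of_mul_le_mul_left h7 hδpos
  refine ⟨1 - v, hvJ, fun z hz => ?_⟩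
  have hzv : z - z * (1 - v) = z * v := by noncomm_ring
  rw [hzv]
  rcases eq_or_ne z 0 with rfl | hz0
  · simp
  have hzpos : 0 < ‖z‖ := norm_pos_iff.2 hz0
  have hn : ‖(‖z‖⁻¹ • z)‖ ≤ 1 := by
    rw [norm_smul, norm_inv, norm_norm, inv_mul_cancel₀ hzpos.ne']
  have h1 := key (‖z‖⁻¹ • z) (smul_mem_ideal J _ hz) hn
  have h2 := key (-(‖z‖⁻¹ • z)) (J.neg_mem (smul_mem_ideal J _ hz)) (by rwa [norm_neg])
  rw [neg_mul, map_neg] at h2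
  rw [smul_mul_assoc, map_smul, smul_eq_mul] at h1 h2
  rw [neg_le, ← sub_nonneg] at h2
  rw [inv_mul_le_iff₀ hzpos] at h1
  rw [abs_le]
  refine ⟨?_, by linarith⟩
  have h3 : -η ≤ ‖z‖⁻¹ * f (z * v) := by linarith
  rw [le_inv_mul_iff₀ hzpos] at h3
  linarith

/-- If `g` is carried by `p` up to `η` and `e` acts almost as a left unit on `p` and `c p`, then
`g (e c) ≈ g (e c p) ≈ g (c p) ≈ g (c e p) ≈ g (c e)`. -/
theorem functional_commutator_le {B : Type*} [CStarAlgebra B] (J : TwoSidedIdeal B) {e : B}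
    (heJ : e ∈ J) (he1 : ‖e‖ ≤ 1) (g : StrongDual ℝ B) (c : B) {p : B} {η : ℝ} (hη : 0 ≤ η)
    (hp : ∀ z ∈ J, |g (z - z * p)| ≤ η * ‖z‖) (hep : ‖p - e * p‖ ≤ η)
    (hecp : ‖c * p - e * (c * p)‖ ≤ η) :
    g (e * c - c * e) ≤ η * (2 * ‖c‖ + ‖g‖ * (1 + ‖c‖)) := by
  have q3 := hp (e * c) (J.mul_mem_right _ _ heJ)
  have q4 := hp (c * e) (J.mul_mem_left _ _ heJ)
  have q5 : ‖e * c‖ ≤ ‖c‖ := (norm_mul_le _ _).trans (mul_le_of_le_one_left (norm_nonneg _) he1)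
  have q6 : ‖c * e‖ ≤ ‖c‖ := (norm_mul_le _ _).trans (mul_le_of_le_one_right (norm_nonneg _) he1)
  have q7 : e * c - c * e = (e * c - e * c * p) - (c * e - c * e * p)
      + (c * (p - e * p) - (c * p - e * (c * p))) := by
    noncomm_ring
  have q8 : g (c * (p - e * p) - (c * p - e * (c * p))) ≤ ‖g‖ * (‖c‖ * η + η) := by
    refine (le_abs_self _).trans ((g.le_opNorm _).trans ?_)
    refine mul_le_mul_of_nonneg_left ?_ (norm_nonneg _)
    refine (norm_sub_le _ _).trans (add_le_add ((norm_mul_le _ _).trans ?_) hecp)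
    exact mul_le_mul_of_nonneg_left hep (norm_nonneg _)
  rw [q7, map_add, map_sub]
  have q9 := (abs_le.1 q3).2
  have q10 := (abs_le.1 q4).1
  have q11 := mul_le_mul_of_nonneg_left q5 hη
  have q12 := mul_le_mul_of_nonneg_left q6 hη
  calc _ ≤ η * ‖c‖ - -(η * ‖c‖) + ‖g‖ * (‖c‖ * η + η) :=
        add_le_add (sub_le_sub (q9.trans q11) ((neg_le_neg q12).trans q10)) q8
    _ = _ := by ring

/-- Existence of approximate units in `J` that almost commute with finitely many elements of `B`.
If `0` were not in the closure of the convex set of commutator tuples `([e, cᵢ])ᵢ`, a functional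
separating it from that set would contradict `functional_commutator_le`. -/
theorem exists_quasicentral {B ι : Type*} [CStarAlgebra B] [Fintype ι] (J : TwoSidedIdeal B)
    (c : ι → B) {y : B} (hy : y ∈ J) {ε : ℝ} (hε : 0 < ε) :
    ∃ e ∈ J, IsSelfAdjoint e ∧ ‖e‖ ≤ 1 ∧ ‖y - e * y‖ ≤ ε ∧ ∀ i, ‖e * c i - c i * e‖ ≤ ε := by
  classical
  set S : Set B := {e | e ∈ J ∧ IsSelfAdjoint e ∧ ‖e‖ ≤ 1 ∧ ‖y - e * y‖ ≤ ε} with hS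
  have hSconv : Convex ℝ S := by
    rintro e ⟨h1, h2, h3, h4⟩ e' ⟨h1', h2', h3', h4'⟩ r r' hr hr' hrr
    refine ⟨J.add_mem (smul_mem_ideal J r h1) (smul_mem_ideal J r' h1'),
      ((IsSelfAdjoint.all r).smul h2).add ((IsSelfAdjoint.all r').smul h2'), ?_, ?_⟩
    · refine (norm_add_le _ _).trans ?_
      rw [norm_smul, norm_smul, Real.norm_of_nonneg hr, Real.norm_of_nonneg hr']
      nlinarith
    · have : y - (r • e + r' • e') * y = r • (y - e * y) + r' • (y - e' * y) := by
        have h5 : y = r • y + r' • y := by rw [← add_smul, hrr, one_smul]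
        rw [add_mul, smul_mul_assoc, smul_mul_assoc, smul_sub, smul_sub]
        nth_rw 1 [h5]
        abel
      rw [this]
      refine (norm_add_le _ _).trans ?_
      rw [norm_smul, norm_smul, Real.norm_of_nonneg hr, Real.norm_of_nonneg hr']
      nlinarith
  let L : B →ₗ[ℝ] (ι → B) := LinearMap.pi fun i =>
    LinearMap.mulRight ℝ (c i) - LinearMap.mulLeft ℝ (c i)
  have hL : ∀ e i, L e i = e * c i - c i * e := fun e i => rfl
  suffices h0 : (0 : ι → B) ∈ closure (L '' S) by
    obtain ⟨_, ⟨e, ⟨h1, h2, h3, h4⟩, rfl⟩, hd⟩ := Metric.mem_closure_iff.1 h0 ε hε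
    refine ⟨e, h1, h2, h3, h4, fun i => ?_⟩
    rw [dist_zero_left] at hd
    rw [← hL]
    exact (norm_le_pi_norm (L e) i).trans hd.le
  by_contra h0
  obtain ⟨f, t, ht, hf⟩ := geometric_hahn_banach_point_closed
    (hSconv.linear_image L).closure isClosed_closure h0
  rw [map_zero] at ht
  let g : ι → StrongDual ℝ B := fun i => f.comp (ContinuousLinearMap.single ℝ (fun _ : ι => B) i)
  have hfg : ∀ w : ι → B, f w = ∑ i, g i (w i) := fun w => by
    conv_lhs => rw [← Finset.univ_sum_single w]
    rw [map_sum]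
    rfl
  set M : ℝ := ∑ i, (2 * ‖c i‖ + ‖g i‖ * (1 + ‖c i‖)) with hM
  have hM0 : 0 ≤ M := by positivity
  set η : ℝ := t / (M + 1) with hη
  have hηpos : 0 < η := by positivity
  choose p hpJ hp using fun i => exists_functional_concentrated J (g i) hηpos
  obtain ⟨e, heJ, hesa, he1, hex⟩ := exists_approx_unit J
    (insert y (Finset.univ.image p ∪ Finset.univ.image fun i => c i * p i)) (by
      intro x hx
      simp only [Finset.mem_insert, Finset.mem_union, Finset.mem_image, Finset.mem_univ,
        true_and] at hx
      rcases hx with rfl | ⟨i, rfl⟩ | ⟨i, rfl⟩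
      · exact hy
      · exact hpJ i
      · exact J.mul_mem_left _ _ (hpJ i)) (lt_min hε hηpos)
  have heS : e ∈ S := ⟨heJ, hesa, he1, (hex y (by simp)).2.trans (min_le_left _ _)⟩
  have h1 := hf (L e) (subset_closure ⟨e, heS, rfl⟩)
  have h2 : ∀ i, g i (L e i) ≤ η * (2 * ‖c i‖ + ‖g i‖ * (1 + ‖c i‖)) := fun i => by
    have q1 : ‖p i - e * p i‖ ≤ η := (hex (p i) (by simp)).2.trans (min_le_right _ _)
    have q2 : ‖c i * p i - e * (c i * p i)‖ ≤ η :=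
      (hex (c i * p i) (by simp)).2.trans (min_le_right _ _)
    exact functional_commutator_le J heJ he1 (g i) (c i) hηpos.le (hp i) q1 q2
  have h3 : f (L e) ≤ η * M := by
    rw [hfg, hM, Finset.mul_sum]
    exact Finset.sum_le_sum fun i _ => h2 i
  have h4 : η * (M + 1) = t := by rw [hη]; field_simp
  linarith

/-! ### The one-and-a-half-ball step and the iteration -/

/-- The one-and-a-half-ball step for `x = ∑ aᵢ h bᵢ` and `y = ∑ aᵢ k bᵢ` with `k ∈ J`: the
compression `u h u` lies in `J`, its image does not exceed `‖x‖` by more than `δ`, and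
subtracting `α` times that image from `x` leaves
`u ((1 - α) x) u + v (x - y) v` up to a small error. -/
theorem exists_compression {B ι : Type*} [CStarAlgebra B] [Fintype ι] (J : TwoSidedIdeal B)
    (a b : ι → B) (h : B) {k : B} (hk : k ∈ J) {α δ : ℝ} (hα : 0 ≤ α) (hα1 : α ≤ 1) (hδ : 0 < δ) :
    ∃ u ∈ J, IsSelfAdjoint u ∧
      ‖∑ i, a i * (u * h * u) * b i‖ ≤ ‖∑ i, a i * h * b i‖ + δ ∧
      ‖∑ i, a i * h * b i - α • ∑ i, a i * (u * h * u) * b i‖ ≤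
        max ((1 - α) * ‖∑ i, a i * h * b i‖)
          ‖∑ i, a i * h * b i - ∑ i, a i * k * b i‖ + δ := by
  set x := ∑ i, a i * h * b i with hx
  set y := ∑ i, a i * k * b i with hy
  have hyJ : y ∈ J := sum_mem fun i _ => J.mul_mem_right _ _ (J.mul_mem_left _ _ hk)
  -- The three errors below are bounded by `6 κ C`, `12 κ` and `2 κ`, which fixes the choice of `κ`.
  set C : ℝ := ∑ i, (‖h‖ * ‖b i‖ + ‖a i‖ * ‖h‖) with hC
  have hC0 : 0 ≤ C := by positivity
  set κ : ℝ := δ / (6 * C + 14) with hκ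
  have hκ0 : 0 < κ := by positivity
  have hκδ : κ * (6 * C + 14) = δ := by rw [hκ]; field_simp
  obtain ⟨e, heJ, hesa, he1, hey, hec⟩ := exists_quasicentral J
    (Sum.elim a (Sum.elim b fun _ : Unit => x)) hyJ hκ0
  obtain ⟨u, v, huJ, -, husa, hvsa, huv, hu1, hv1, huc, hvc, hvy, -⟩ :=
    exists_circle_pair J heJ hesa he1
  have hua : ∀ i, ‖u * a i - a i * u‖ ≤ 6 * κ := fun i =>
    (huc (a i)).trans (by have := hec (Sum.inl i); simp only [Sum.elim_inl] at this; linarith)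
  have hub : ∀ i, ‖u * b i - b i * u‖ ≤ 6 * κ := fun i =>
    (huc (b i)).trans (by
      have := hec (Sum.inr (Sum.inl i)); simp only [Sum.elim_inl, Sum.elim_inr] at this; linarith)
  have hex : ‖e * x - x * e‖ ≤ κ := by simpa using hec (Sum.inr (Sum.inr ()))
  set E := ∑ i, a i * (u * h * u) * b i - u * x * u with hE
  have hEn : ‖E‖ ≤ 6 * κ * C := by
    have : E = ∑ i, (a i * u * h * (u * b i - b i * u) - (u * a i - a i * u) * h * b i * u) := by
      rw [hE, hx, Finset.mul_sum, Finset.sum_mul, ← Finset.sum_sub_distrib]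
      exact Finset.sum_congr rfl fun i _ => by noncomm_ring
    rw [this, hC, Finset.mul_sum]
    refine (norm_sum_le _ _).trans (Finset.sum_le_sum fun i _ => (norm_sub_le _ _).trans ?_)
    have n1 : ‖a i * u * h * (u * b i - b i * u)‖ ≤ ‖a i‖ * 1 * ‖h‖ * (6 * κ) := by
      refine (norm_mul_le _ _).trans (mul_le_mul ?_ (hub i) (norm_nonneg _) (by positivity))
      refine (norm_mul_le _ _).trans ?_
      gcongr
      refine (norm_mul_le _ _).trans ?_
      gcongr
    have n2 : ‖(u * a i - a i * u) * h * b i * u‖ ≤ 6 * κ * ‖h‖ * ‖b i‖ * 1 := by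
      refine (norm_mul_le _ _).trans (mul_le_mul ?_ hu1 (norm_nonneg _) (by positivity))
      refine (norm_mul_le _ _).trans ?_
      gcongr
      refine (norm_mul_le _ _).trans ?_
      gcongr
      exact hua i
    linarith
  have hR : ‖x - (u * x * u + v * x * v)‖ ≤ 12 * κ := by
    have : x - (u * x * u + v * x * v) = -((u * x - x * u) * u + (v * x - x * v) * v) := by
      calc x - (u * x * u + v * x * v) = x * (u * u + v * v) - (u * x * u + v * x * v) := by
            rw [huv, mul_one]
        _ = _ := by noncomm_ring
    rw [this, norm_neg]
    have n1 := huc x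
    have n2 := hvc x
    have n3 : ‖(u * x - x * u) * u‖ ≤ ‖u * x - x * u‖ := (norm_mul_le _ _).trans
      (mul_le_of_le_one_right (norm_nonneg _) hu1)
    have n4 : ‖(v * x - x * v) * v‖ ≤ ‖v * x - x * v‖ := (norm_mul_le _ _).trans
      (mul_le_of_le_one_right (norm_nonneg _) hv1)
    refine (norm_add_le _ _).trans ?_
    linarith
  have hvyv : ‖v * y * v‖ ≤ 2 * κ := by
    refine (norm_mul_le _ _).trans ((mul_le_of_le_one_right (norm_nonneg _) hv1).trans ?_)
    have := hvy y
    linarith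
  have hsum : ∑ i, a i * (u * h * u) * b i = u * x * u + E := by rw [hE]; abel
  refine ⟨u, huJ, husa, ?_, ?_⟩
  · rw [hsum]
    refine (norm_add_le _ _).trans (add_le_add ?_ (hEn.trans (by nlinarith)))
    calc ‖u * x * u‖ ≤ ‖u‖ * ‖x‖ * ‖u‖ := by
          refine (norm_mul_le _ _).trans ?_
          gcongr
          exact norm_mul_le _ _
      _ ≤ 1 * ‖x‖ * 1 := by gcongr
      _ = ‖x‖ := by ring
  · have hdec : x - α • ∑ i, a i * (u * h * u) * b i =
        (u * ((1 - α) • x) * u + v * (x - y) * v) +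
          ((x - (u * x * u + v * x * v)) + v * y * v - α • E) := by
      rw [hsum, smul_add, mul_smul_comm, smul_mul_assoc, sub_smul, one_smul]
      noncomm_ring
    rw [hdec]
    have n1 := norm_conj_add_conj_le husa hvsa huv ((1 - α) • x) (x - y)
    rw [norm_smul, Real.norm_of_nonneg (by linarith : 0 ≤ 1 - α)] at n1
    have n2 : ‖α • E‖ ≤ 6 * κ * C := by
      rw [norm_smul, Real.norm_of_nonneg hα]
      exact (mul_le_of_le_one_left (norm_nonneg _) hα1).trans hEn
    refine (norm_add_le _ _).trans (add_le_add n1 ?_)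
    refine (norm_sub_le _ _).trans ?_
    have n3 := norm_add_le (x - (u * x * u + v * x * v)) (v * y * v)
    nlinarith

/-- A relaxed one-and-a-half-ball property implies proximinality: the excess of `‖x - s‖` over the
distance `d` can be halved at a cost, in `s`, proportional to the excess, so successive
corrections converge geometrically. -/
theorem exists_best_approx {E : Type*} [NormedAddCommGroup E] [CompleteSpace E]
    (X Y : AddSubgroup E) (hYX : Y ≤ X) (hY : IsClosed (Y : Set E))
    (H : ∀ x ∈ X, ∀ y₀ ∈ Y, ∀ ε > 0, ‖x‖ ≤ ‖x - y₀‖ + ε → ∀ δ > 0,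
      ∃ y ∈ Y, ‖y‖ ≤ ε + δ ∧ ‖x - y‖ ≤ ‖x - y₀‖ + δ) :
    ∀ x ∈ X, ∃ y ∈ Y, ‖x - y‖ = Metric.infDist x (Y : Set E) := by
  intro x hx
  set d := Metric.infDist x (Y : Set E) with hd
  have hne : (Y : Set E).Nonempty := ⟨0, Y.zero_mem⟩
  have hle : ∀ y ∈ Y, d ≤ ‖x - y‖ := fun y hy => by
    rw [← dist_eq_norm]; exact Metric.infDist_le_dist_of_mem hy
  have step : ∀ s ∈ Y, ∀ r > 0, ‖x - s‖ ≤ d + r →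
      ∃ s' ∈ Y, ‖x - s'‖ ≤ d + r / 2 ∧ ‖s - s'‖ ≤ 2 * r := by
    intro s hs r hr hxs
    obtain ⟨y₁, hy₁, hlt⟩ := (Metric.infDist_lt_iff hne).1 (show d < d + r / 4 by linarith)
    rw [dist_eq_norm] at hlt
    have e1 : x - s - (y₁ - s) = x - y₁ := by abel
    obtain ⟨y, hy, h1, h2⟩ := H (x - s) (X.sub_mem hx (hYX hs)) (y₁ - s) (Y.sub_mem hy₁ hs) r hr
      (by rw [e1]; linarith [hle y₁ hy₁]) (r / 4) (by positivity)
    refine ⟨s + y, Y.add_mem hs hy, ?_, ?_⟩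
    · rw [← sub_sub]; rw [e1] at h2; linarith
    · rw [sub_add_cancel_left, norm_neg]; linarith
  obtain ⟨s₀, hs₀, hlt⟩ := (Metric.infDist_lt_iff hne).1 (show d < d + 1 by linarith)
  rw [dist_eq_norm] at hlt
  choose! g hgY hg1 hg2 using step
  let σ : ℕ → E := fun n => Nat.rec s₀ (fun n s => g s ((1 / 2) ^ n)) n
  have hσ : ∀ n, σ (n + 1) = g (σ n) ((1 / 2) ^ n) := fun n => rfl
  have hinv : ∀ n, σ n ∈ Y ∧ ‖x - σ n‖ ≤ d + (1 / 2) ^ n := by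
    intro n
    induction n with
    | zero => exact ⟨hs₀, by simpa [σ] using hlt.le⟩
    | succ n ih =>
      rw [hσ]
      refine ⟨hgY _ ih.1 _ (by positivity) ih.2, ?_⟩
      have := hg1 _ ih.1 _ (by positivity) ih.2
      rw [pow_succ]; linarith
  have hcau : CauchySeq σ := cauchySeq_of_le_geometric (1 / 2) 2 (by norm_num) fun n => by
    rw [dist_eq_norm, hσ]
    exact hg2 _ (hinv n).1 _ (by positivity) (hinv n).2
  obtain ⟨y, hy⟩ := cauchySeq_tendsto_of_complete hcau
  have hyY : y ∈ Y := hY.mem_of_tendsto hy (Filter.Eventually.of_forall fun n => (hinv n).1)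
  refine ⟨y, hyY, le_antisymm ?_ (hle y hyY)⟩
  have t1 : Filter.Tendsto (fun n => ‖x - σ n‖) Filter.atTop (nhds ‖x - y‖) :=
    (tendsto_const_nhds.sub hy).norm
  have t2 : Filter.Tendsto (fun n : ℕ => d + (1 / 2 : ℝ) ^ n) Filter.atTop (nhds (d + 0)) :=
    tendsto_const_nhds.add (tendsto_pow_atTop_nhds_zero_of_lt_one (by norm_num) (by norm_num))
  simpa using le_of_tendsto_of_tendsto' t1 t2 fun n => (hinv n).2

/-! ### Passage to the unitization -/

/-- A closed ring ideal of a C⋆-algebra is stable under scalars: `r x = lim (r e) x` along an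
approximate unit of the algebra. -/
theorem complex_smul_mem {A : Type*} [NonUnitalCStarAlgebra A] (I : TwoSidedIdeal A)
    (hI : IsClosed (I : Set A)) (r : ℂ) {x : A} (hx : x ∈ I) : r • x ∈ I := by
  let _ := CStarAlgebra.spectralOrder A
  have _ := CStarAlgebra.spectralOrderedRing A
  have hl := CStarAlgebra.increasingApproximateUnit A
  have := hl.neBot
  have ht : Filter.Tendsto (fun e : A => r • (e * x)) (CStarAlgebra.approximateUnit A)
      (nhds (r • x)) := (hl.tendsto_mul_right x).const_smul r
  refine hI.mem_of_tendsto ht (Filter.Eventually.of_forall fun e => ?_)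
  rw [← smul_mul_assoc]
  exact I.mul_mem_left _ _ hx

/-- The image of a closed ideal `I` of `A` in the unitization, as a two-sided ideal there. -/
def unitizationIdeal {A : Type*} [NonUnitalCStarAlgebra A] (I : TwoSidedIdeal A)
    (hI : IsClosed (I : Set A)) : TwoSidedIdeal (Unitization ℂ A) :=
  TwoSidedIdeal.mk' ((fun x : A => (x : Unitization ℂ A)) '' (I : Set A))
    ⟨0, I.zero_mem, by simp⟩
    (by
      rintro _ _ ⟨x, hx, rfl⟩ ⟨y, hy, rfl⟩
      exact ⟨x + y, I.add_mem hx hy, by simp⟩)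
    (by
      rintro _ ⟨x, hx, rfl⟩
      exact ⟨-x, I.neg_mem hx, by simp⟩)
    (by
      rintro b _ ⟨x, hx, rfl⟩
      refine ⟨b.fst • x + b.snd * x,
        I.add_mem (complex_smul_mem I hI _ hx) (I.mul_mem_left _ _ hx), ?_⟩
      ext <;> simp)
    (by
      rintro _ b ⟨x, hx, rfl⟩
      refine ⟨b.fst • x + x * b.snd,
        I.add_mem (complex_smul_mem I hI _ hx) (I.mul_mem_right _ _ hx), ?_⟩
      ext <;> simp)

theorem mem_unitizationIdeal {A : Type*} [NonUnitalCStarAlgebra A] (I : TwoSidedIdeal A)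
    (hI : IsClosed (I : Set A)) (b : Unitization ℂ A) :
    b ∈ unitizationIdeal I hI ↔ ∃ x ∈ I, (x : Unitization ℂ A) = b :=
  TwoSidedIdeal.mem_mk' _ _ _ _ _ _ _

end ElemProx

/-- Let `A` be a C*-algebra, `I` a closed two-sided ideal of `A`, and
`T : A → A` an elementary operator with coefficients in the minimal unitization. Then the
closure of `T(I_sa)` is proximinal in the closure of `T(A_sa)`, where `A_sa` and `I_sa`
denote the self-adjoint parts. -/
theorem stmt_1 {A : Type*} [NonUnitalCStarAlgebra A]
    (I : TwoSidedIdeal A) (hI : IsClosed (I : Set A))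
    (N : ℕ) (a b : Fin N → Unitization ℂ A) (T : A → A)
    (hT : ∀ x : A, (T x : Unitization ℂ A) = ∑ i, a i * (x : Unitization ℂ A) * b i) :
    ∀ x ∈ closure (T '' {x : A | IsSelfAdjoint x}),
      ∃ y ∈ closure (T '' {x : A | x ∈ I ∧ IsSelfAdjoint x}),
        ‖x - y‖ = Metric.infDist x (closure (T '' {x : A | x ∈ I ∧ IsSelfAdjoint x})) := by
  let Tm : A →+ A := AddMonoidHom.mk' T fun x y => by
    apply Unitization.inr_injective (R := ℂ)
    rw [Unitization.inr_add, hT, hT, hT, ← Finset.sum_add_distrib]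
    exact Finset.sum_congr rfl fun i _ => by rw [Unitization.inr_add, mul_add, add_mul]
  let Isa : AddSubgroup A :=
    { carrier := {x : A | x ∈ I ∧ IsSelfAdjoint x}
      zero_mem' := ⟨I.zero_mem, IsSelfAdjoint.zero A⟩
      add_mem' := fun h h' => ⟨I.add_mem h.1 h'.1, h.2.add h'.2⟩
      neg_mem' := fun h => ⟨I.neg_mem h.1, h.2.neg⟩ }
  let X : AddSubgroup A := ((selfAdjoint A).map Tm).topologicalClosure
  let Y : AddSubgroup A := (Isa.map Tm).topologicalClosure
  have hYX : Y ≤ X := closure_mono (Set.image_mono fun x hx => hx.2)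
  refine ElemProx.exists_best_approx X Y hYX isClosed_closure ?_
  intro x hx y₀ hy₀ ε hε hxy δ hδ
  obtain ⟨_, ⟨h, hh, rfl⟩, hxh⟩ := Metric.mem_closure_iff.1 hx (δ / 4) (by positivity)
  obtain ⟨_, ⟨k, hk, rfl⟩, hyk⟩ := Metric.mem_closure_iff.1 hy₀ (δ / 4) (by positivity)
  change dist x (T h) < _ at hxh
  change dist y₀ (T k) < _ at hyk
  rw [dist_eq_norm] at hxh hyk
  set r := ‖T h - T k‖ with hr
  have hr0 : 0 ≤ r := norm_nonneg _
  -- Replacing `x, y₀` by `T h, T k` changes each norm by at most a fixed multiple of `δ / 4`.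
  have hr1 : ‖x - y₀‖ ≤ r + δ / 2 := by
    have : x - y₀ = (x - T h) + (T h - T k) - (y₀ - T k) := by abel
    rw [this]
    refine (norm_sub_le _ _).trans ?_
    linarith [norm_add_le (x - T h) (T h - T k)]
  have hr2 : r ≤ ‖x - y₀‖ + δ / 2 := by
    have : T h - T k = (x - y₀) - (x - T h) + (y₀ - T k) := by abel
    rw [hr, this]
    refine (norm_add_le _ _).trans ?_
    linarith [norm_sub_le (x - y₀) (x - T h)]
  have hTh : ‖T h‖ ≤ r + (ε + 3 * δ / 4) := by
    have : T h = x - (x - T h) := by abel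
    rw [this]
    linarith [norm_sub_le x (x - T h)]
  set ε' := ε + 3 * δ / 4 with hε'
  have hε'0 : 0 < ε' := by positivity
  -- With this `α`, both `α ‖T h‖ ≤ ε'` and `(1 - α) ‖T h‖ ≤ r` follow from `‖T h‖ ≤ r + ε'`.
  set α := ε' / (r + ε') with hα
  have hα0 : 0 ≤ α := by positivity
  have hα1 : α ≤ 1 := (div_le_one (by positivity)).2 (by linarith)
  have hαT : α * ‖T h‖ ≤ ε' := by
    calc α * ‖T h‖ ≤ α * (r + ε') := by gcongr
      _ = ε' := by rw [hα]; field_simp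
  have hαT' : (1 - α) * ‖T h‖ ≤ r := by
    calc (1 - α) * ‖T h‖ ≤ (1 - α) * (r + ε') := by
          have : 0 ≤ 1 - α := by linarith
          gcongr
      _ = r := by rw [hα]; field_simp; ring
  obtain ⟨u, huJ, husa, h1, h2⟩ := ElemProx.exists_compression (ElemProx.unitizationIdeal I hI) a b
    (h : Unitization ℂ A) ((ElemProx.mem_unitizationIdeal I hI _).2 ⟨k, hk.1, rfl⟩) hα0 hα1
    (show 0 < δ / 4 by positivity)
  obtain ⟨g, hgI, hg⟩ := (ElemProx.mem_unitizationIdeal I hI _).1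
    (ElemProx.smul_mem_ideal _ α (TwoSidedIdeal.mul_mem_right _ (u * h) u
      (TwoSidedIdeal.mul_mem_right _ u h huJ)))
  have hgsa : IsSelfAdjoint g := by
    apply Unitization.inr_injective (R := ℂ)
    have hh' : star (h : Unitization ℂ A) = h := by
      rw [← Unitization.inr_star, show star h = h from hh]
    rw [Unitization.inr_star, hg]
    simp [husa.star_eq, hh', mul_assoc]
  have hTg : (T g : Unitization ℂ A) = α • ∑ i, a i * (u * h * u) * b i := by
    rw [hT, hg, Finset.smul_sum]
    exact Finset.sum_congr rfl fun i _ => by rw [mul_smul_comm, smul_mul_assoc]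
  rw [← hT h, ← hT k, ← hTg, ← Unitization.inr_sub, ← Unitization.inr_sub, Unitization.norm_inr,
    Unitization.norm_inr, Unitization.norm_inr] at h2
  rw [← hT h, Unitization.norm_inr] at h1
  have h3 : ‖T g‖ ≤ ε' + δ / 4 := by
    rw [← Unitization.norm_inr (𝕜 := ℂ), hTg, norm_smul, Real.norm_of_nonneg hα0]
    calc α * ‖∑ i, a i * (u * h * u) * b i‖ ≤ α * (‖T h‖ + δ / 4) := by gcongr
      _ = α * ‖T h‖ + α * (δ / 4) := by ring
      _ ≤ ε' + δ / 4 := add_le_add hαT (mul_le_of_le_one_left (by positivity) hα1)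
  refine ⟨T g, subset_closure ⟨g, ⟨hgI, hgsa⟩, rfl⟩, by linarith, ?_⟩
  have h4 : ‖T h - T g‖ ≤ r + δ / 4 := h2.trans (by gcongr; exact max_le hαT' le_rfl)
  have : x - T g = (x - T h) + (T h - T g) := by abel
  rw [this]
  refine (norm_add_le _ _).trans ?_
  linarith
end

section
/- Let A be a C*-algebra, I a closed two-sided ideal of A, T : A → A an elementary operator T(x) = Σ_{i=1}^N a_i x b_i with coefficients a_i, b_i in the minimal unitization of A, and let q : A → A/I be the quotient map. Let b ∈ A/I. If there exists a_0 ∈ A with q(a_0) = b such that q(T(a_0)) = b, then the closure of the set { T(a) : a ∈ A, q(a) = b } contains an element of norm equal to ‖b‖ (in particular, b has a lift in this closure of norm exactly ‖b‖). -/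
/-!
Let `I = ker q` and work in the unitization of `A`. The point is an improvement step
(`elementary_step`): if `z` is a lift of `b` with `T z` a lift of `b` and `‖T z‖ ≤ ‖b‖ + ε`, then
for every `δ > 0` there is a lift `z'` with `‖T z'‖ ≤ ‖b‖ + δ` and `‖T z' - T z‖ ≤ ε + δ`.
Iterating with `ε = K / 2 ^ n` gives a Cauchy sequence `T zₙ`, whose limit lifts `b` and has norm
at most, hence exactly, `‖b‖`.

For the step put `x = T z`, `t = ε / (‖b‖ + ε)` and `z' = z - t e z`, where `e ∈ I`, `0 ≤ e ≤ 1`,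
almost commutes with the coefficients of `T` and with finitely many further elements fixed in
advance. Then `T z' ≈ x - t e x`, which is within `t ‖x‖ ≤ ε` of `x`. Choose a lift `y` of `b` with
`‖y‖ ≤ ‖b‖` (`exists_lift_norm_le`), and ask also that `e` almost fixes `x - y ∈ I`. Then
`x - t e x ≈ (1 - e) y + e (1 - t) x`, where `y` and `(1 - t) x` both have norm at most `‖b‖`. An
operator-convex combination of this kind has norm at most `‖b‖` up to commutators with `e`
(`norm_convex_comb_le`).

Such quasicentral `e` (`exists_quasicentral`) are averages of `n` elements `u₁, …, uₙ` of an
approximate unit of `I`. Choosing them successively makes the commutators `[uₖ, f]` almost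
orthogonal, so that `‖∑ₖ [uₖ, f]‖` grows only like `√n`.
-/

open Filter Topology

/-! ### Estimates in a unital C⋆-algebra -/

lemma norm_one_le' {U : Type*} [CStarAlgebra U] : ‖(1 : U)‖ ≤ 1 := by
  rcases subsingleton_or_nontrivial U with h | h
  · simp [Subsingleton.elim (1 : U) 0]
  · simp

section Unital
variable {U : Type*} [CStarAlgebra U] [PartialOrder U] [StarOrderedRing U]

/-- An operator-convex combination of two elements of norm at most `m` has norm almost at most `m`,
provided `e` almost commutes with a finite set depending only on the two elements. With
`m² = y⋆y + d₁⋆d₁ = v⋆v + d₂⋆d₂` and `w = (1 - e) y + e v`, convexity of `w ↦ w⋆w` gives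
`w⋆w ≤ y⋆(1 - e)y + v⋆ev ≤ y⋆(1 - e)y + d₁⋆(1 - e)d₁ + v⋆ev + d₂⋆ed₂`, and the last
expression equals `m²` up to commutators of `e` with `y, d₁, v, d₂`. -/
lemma norm_convex_comb_le {y v : U} {m : ℝ} (hy : ‖y‖ ≤ m) (hv : ‖v‖ ≤ m) {δ : ℝ}
    (hδ : 0 < δ) :
    ∃ F : Finset U, ∃ η > 0, ∀ e : U, 0 ≤ e → e ≤ 1 → (∀ f ∈ F, ‖e * f - f * e‖ ≤ η) →
      ‖(1 - e) * y + e * v‖ ≤ m + δ := by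
  classical
  have hm : 0 ≤ m := (norm_nonneg y).trans hy
  have key : ∀ x : U, ‖x‖ ≤ m → ∃ d : U, algebraMap ℝ U (m ^ 2) = star x * x + star d * d := by
    intro x hx
    have h1 : star x * x ≤ algebraMap ℝ U (m ^ 2) := by
      rw [← CStarAlgebra.norm_le_iff_le_algebraMap _ (by positivity) (star_mul_self_nonneg x),
        CStarRing.norm_star_mul_self]
      nlinarith [norm_nonneg x]
    obtain ⟨d, hd⟩ := (CStarAlgebra.nonneg_iff_eq_star_mul_self).1 (sub_nonneg.2 h1)
    exact ⟨d, by rw [← hd]; abel⟩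
  obtain ⟨d₁, hd₁⟩ := key y hy
  obtain ⟨d₂, hd₂⟩ := key v hv
  set K : ℝ := ‖y‖ + ‖d₁‖ + ‖v‖ + ‖d₂‖ with hK
  have hK0 : 0 ≤ K := by positivity
  refine ⟨{y, d₁, v, d₂}, δ ^ 2 / (K + 1), by positivity, fun e he0 he1 hF => ?_⟩
  have hy' := hF y (by simp)
  have hd₁' := hF d₁ (by simp)
  have hv' := hF v (by simp)
  have hd₂' := hF d₂ (by simp)
  set η := δ ^ 2 / (K + 1) with hη
  have hηK : K * η ≤ δ ^ 2 := by
    rw [hη, mul_div_assoc', div_le_iff₀ (by positivity)]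
    nlinarith [sq_nonneg δ]
  have hse : star e = e := (IsSelfAdjoint.of_nonneg he0).star_eq
  have he1' : 0 ≤ 1 - e := sub_nonneg.2 he1
  have hee : 0 ≤ e - e * e := by
    have h := star_left_conjugate_nonneg (c := e) he1'
    have h2 := star_left_conjugate_nonneg (c := (1 - e)) he0
    have h3 : star e * (1 - e) * e + star (1 - e) * e * (1 - e) = e - e * e := by
      simp only [star_sub, star_one, hse]; noncomm_ring
    rw [← h3]; exact add_nonneg h h2
  set w := (1 - e) * y + e * v with hw
  set R := star y * (1 - e) * y + star v * e * v + star d₁ * (1 - e) * d₁ + star d₂ * e * d₂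
    with hR
  have hwR : star w * w ≤ R := by
    have h1 := star_left_conjugate_nonneg (c := y - v) hee
    have h2 := star_left_conjugate_nonneg (c := d₁) he1'
    have h3 := star_left_conjugate_nonneg (c := d₂) he0
    have h4 : R - star w * w = star (y - v) * (e - e * e) * (y - v) + star d₁ * (1 - e) * d₁ +
        star d₂ * e * d₂ := by
      simp only [hR, hw, star_add, star_mul, star_sub, star_one, hse]; noncomm_ring
    rw [← sub_nonneg, h4]
    exact add_nonneg (add_nonneg h1 h2) h3
  have hReq : R = algebraMap ℝ U (m ^ 2) - star y * (e * y - y * e)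
      - star d₁ * (e * d₁ - d₁ * e) + star v * (e * v - v * e) + star d₂ * (e * d₂ - d₂ * e) := by
    have : algebraMap ℝ U (m ^ 2) = (star y * y + star d₁ * d₁) * (1 - e)
        + (star v * v + star d₂ * d₂) * e := by
      rw [← hd₁, ← hd₂]; noncomm_ring
    rw [this, hR]; noncomm_ring
  have hb : ∀ x : U, ‖e * x - x * e‖ ≤ η → ‖star x * (e * x - x * e)‖ ≤ ‖x‖ * η := fun x hx =>
    (norm_mul_le _ _).trans (by rw [norm_star]; gcongr)
  have hRn : ‖R‖ ≤ m ^ 2 + δ ^ 2 := by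
    have h0 : ‖algebraMap ℝ U (m ^ 2)‖ ≤ m ^ 2 := by
      rw [norm_algebraMap, Real.norm_of_nonneg (by positivity)]
      nlinarith [norm_one_le' (U := U), sq_nonneg m]
    rw [hReq]
    refine (norm_add_le _ _).trans ?_
    refine (add_le_add_left (norm_add_le _ _) _).trans ?_
    refine (add_le_add_left (add_le_add_left (norm_sub_le _ _) _) _).trans ?_
    refine (add_le_add_left (add_le_add_left (add_le_add_left (norm_sub_le _ _) _) _) _).trans ?_
    have := hb _ hy'
    have := hb _ hd₁'
    have := hb _ hv'
    have := hb _ hd₂'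
    nlinarith
  have hw2 : ‖w‖ * ‖w‖ ≤ m ^ 2 + δ ^ 2 := by
    rw [← CStarRing.norm_star_mul_self]
    exact (CStarAlgebra.norm_le_norm_of_nonneg_of_le (star_mul_self_nonneg w) hwR).trans hRn
  nlinarith [norm_nonneg w, mul_nonneg hm hδ.le]

/-- Quasicentral approximate units: an ideal `J` with an approximate unit (`happ`) contains
`0 ≤ e ≤ 1` almost fixing a given `z ∈ J` and almost commuting with finitely many elements of the
whole algebra. -/
lemma exists_quasicentral_s2 (J : Set U) (h0 : (0 : U) ∈ J)
    (hadd : ∀ x ∈ J, ∀ y ∈ J, x + y ∈ J)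
    (hl : ∀ f : U, ∀ x ∈ J, f * x ∈ J) (hr : ∀ f : U, ∀ x ∈ J, x * f ∈ J)
    (happ : ∀ S : Finset U, (∀ z ∈ S, z ∈ J) → ∀ ε > 0,
      ∃ u ∈ J, 0 ≤ u ∧ u ≤ 1 ∧ ∀ z ∈ S, ‖u * z - z‖ ≤ ε)
    (F : Finset U) {z : U} (hz : z ∈ J) {ε : ℝ} (hε : 0 < ε) :
    ∃ e ∈ J, 0 ≤ e ∧ e ≤ 1 ∧ ‖e * z - z‖ ≤ ε ∧ ∀ f ∈ F, ‖e * f - f * e‖ ≤ ε := by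
  classical
  obtain ⟨M, hM0, hM⟩ : ∃ M : ℝ, 0 ≤ M ∧ ∀ f ∈ F, ‖f‖ ≤ M :=
    ⟨∑ f ∈ F, ‖f‖, by positivity, fun f hf =>
      Finset.single_le_sum (f := fun f : U => ‖f‖) (fun _ _ => norm_nonneg _) hf⟩
  set K : ℝ := (2 * M) ^ 2 + 2 with hK
  have hneg : ∀ x ∈ J, -x ∈ J := fun x hx => by simpa using hl (-1) x hx
  have hcomm : ∀ g ∈ J, ∀ f : U, g * f - f * g ∈ J := fun g hg f => by
    rw [sub_eq_add_neg]; exact hadd _ (hr f g hg) _ (hneg _ (hl f g hg))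
  -- `g` is a sum of `n` members of the approximate unit; the element sought is `g / n`
  have main : ∀ n : ℕ, ∃ g ∈ J, 0 ≤ g ∧ g ≤ (n : U) ∧ ‖g * z - n * z‖ ≤ n * ε ∧
      ∀ f ∈ F, ‖g * f - f * g‖ ^ 2 ≤ n * K := by
    intro n
    induction n with
    | zero => exact ⟨0, h0, le_rfl, by simp, by simp, by simp⟩
    | succ n ih =>
      obtain ⟨g, hgJ, hg0, hgn, hgz, hgF⟩ := ih
      set D : U → U := fun f => g * f - f * g with hD
      obtain ⟨ε', hε'0, hε'ε, hε'M⟩ : ∃ ε' > 0, ε' ≤ ε ∧ (M + 1) * ε' ≤ 1 := by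
        refine ⟨min ε (1 / (M + 1)), by positivity, min_le_left _ _, ?_⟩
        calc (M + 1) * min ε (1 / (M + 1)) ≤ (M + 1) * (1 / (M + 1)) := by
              gcongr; exact min_le_right _ _
          _ = 1 := by field_simp
      obtain ⟨u, huJ, hu0, hu1, huS⟩ := happ
        (insert z (F.image D ∪ F.image fun f => star f * D f)) (by
          intro x hx
          simp only [Finset.mem_insert, Finset.mem_union, Finset.mem_image] at hx
          rcases hx with rfl | ⟨f, -, rfl⟩ | ⟨f, -, rfl⟩
          · exact hz
          · exact hcomm g hgJ f
          · exact hl _ _ (hcomm g hgJ f)) ε' hε'0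
      have hsu : star u = u := (IsSelfAdjoint.of_nonneg hu0).star_eq
      have hun : ‖u‖ ≤ 1 := (CStarAlgebra.norm_le_one_iff_of_nonneg u hu0).2 hu1
      refine ⟨g + u, hadd _ hgJ _ huJ, add_nonneg hg0 hu0, ?_, ?_, ?_⟩
      · push_cast; exact add_le_add hgn hu1
      · have h1 := huS z (by simp)
        have h2 : (g + u) * z - ((n + 1 : ℕ) : U) * z = (g * z - n * z) + (u * z - z) := by
          push_cast; noncomm_ring
        rw [h2]
        push_cast
        linarith [norm_add_le (g * z - n * z) (u * z - z)]
      · intro f hf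
        have h1 := huS (D f) (by simp; right; left; exact ⟨f, hf, rfl⟩)
        have h2 := huS (star f * D f) (by simp; right; right; exact ⟨f, hf, rfl⟩)
        have hfM := hM f hf
        set d := u * f - f * u with hd
        have hdn : ‖d‖ ≤ 2 * M := by
          have a1 : ‖u * f‖ ≤ 1 * M := (norm_mul_le _ _).trans (by gcongr)
          have a2 : ‖f * u‖ ≤ M * 1 := (norm_mul_le _ _).trans (by gcongr)
          linarith [norm_sub_le (u * f) (f * u)]
        -- the new commutator is almost orthogonal to the old sum, because `u` almost fixes
        -- both `D f` and `star f * D f`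
        have hcross : ‖star d * D f‖ ≤ 1 := by
          have a1 : star d * D f = star f * (u * D f - D f) - (u * (star f * D f) - star f * D f) := by
            simp only [hd, star_sub, star_mul, hsu]; noncomm_ring
          have a2 : ‖star f * (u * D f - D f)‖ ≤ M * ε' :=
            (norm_mul_le _ _).trans (by rw [norm_star]; gcongr)
          rw [a1]
          linarith [norm_sub_le (star f * (u * D f - D f)) (u * (star f * D f) - star f * D f)]
        have hcross' : ‖star (D f) * d‖ ≤ 1 := by
          rw [← norm_star]; simpa using hcross
        have hsum : (g + u) * f - f * (g + u) = D f + d := by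
          simp only [hD, hd]; noncomm_ring
        have hexp : star (D f + d) * (D f + d)
            = star (D f) * D f + star (D f) * d + star d * D f + star d * d := by
          rw [star_add]; noncomm_ring
        have hDf : ‖star (D f) * D f‖ ≤ n * K := by
          rw [CStarRing.norm_star_mul_self, ← sq]; exact hgF f hf
        have hdd : ‖star d * d‖ ≤ (2 * M) ^ 2 := by
          rw [CStarRing.norm_star_mul_self, ← sq]; gcongr
        rw [hsum, sq, ← CStarRing.norm_star_mul_self, hexp]
        push_cast
        have b1 := norm_add_le (star (D f) * D f + star (D f) * d + star d * D f) (star d * d)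
        have b2 := norm_add_le (star (D f) * D f + star (D f) * d) (star d * D f)
        have b3 := norm_add_le (star (D f) * D f) (star (D f) * d)
        linarith
  obtain ⟨n, hn⟩ := exists_nat_gt (K / ε ^ 2)
  have hKpos : 0 < K := by positivity
  have hnpos : (0 : ℝ) < n := lt_trans (by positivity) hn
  obtain ⟨g, hgJ, hg0, hgn, hgz, hgF⟩ := main n
  set r : ℝ := (n : ℝ)⁻¹ with hr'
  have hr0 : 0 ≤ r := by positivity
  have hrn : r • (n : U) = 1 := by
    have : (n : U) = (n : ℝ) • (1 : U) := by rw [Nat.cast_smul_eq_nsmul, nsmul_one]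
    rw [hr', this, smul_smul, inv_mul_cancel₀ hnpos.ne', one_smul]
  refine ⟨r • g, ?_, smul_nonneg hr0 hg0, ?_, ?_, ?_⟩
  · rw [Algebra.smul_def]; exact hl _ g hgJ
  · rw [← hrn]; exact smul_le_smul_of_nonneg_left hgn hr0
  · have : r • g * z - z = r • (g * z - n * z) := by
      rw [smul_sub, ← smul_mul_assoc, ← smul_mul_assoc, hrn, one_mul]
    rw [this, norm_smul, Real.norm_of_nonneg hr0]
    calc r * ‖g * z - n * z‖ ≤ r * (n * ε) := by gcongr
      _ = ε := by rw [hr']; field_simp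
  · intro f hf
    have : r • g * f - f * r • g = r • (g * f - f * g) := by
      rw [smul_sub, smul_mul_assoc, mul_smul_comm]
    rw [this, norm_smul, Real.norm_of_nonneg hr0, hr', inv_mul_le_iff₀ hnpos]
    refine abs_le_of_sq_le_sq' ?_ (by positivity) |>.2
    refine (hgF f hf).trans ?_
    rw [div_lt_iff₀ (by positivity)] at hn
    nlinarith
end Unital

/-! ### Lifting and approximate units for a star homomorphism -/

lemma continuous_of_starHom {A B : Type*} [NonUnitalCStarAlgebra A] [NonUnitalCStarAlgebra B]
    (q : A →⋆ₙₐ[ℂ] B) : Continuous q :=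
  AddMonoidHomClass.continuous_of_bound q 1
    (by simpa only [one_mul] using NonUnitalStarAlgHom.norm_apply_le q)

/-- `(1 - k(h)) h (1 - k(h))`, expanded to avoid the unit, as a functional calculus of `h`. -/
lemma cfcn_compress {A : Type*} [NonUnitalCStarAlgebra A] {h : A} (hsa : IsSelfAdjoint h)
    {k : ℝ → ℝ} (hk : Continuous k) (hk0 : k 0 = 0) :
    h - cfcₙ k h * h - h * cfcₙ k h + cfcₙ k h * (h * cfcₙ k h)
      = cfcₙ (fun s => s - k s * s - s * k s + k s * (s * k s)) h := by
  have c1 := hk.continuousOn (s := quasispectrum ℝ h)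
  have c0 : ContinuousOn (fun s : ℝ => s) (quasispectrum ℝ h) := continuousOn_id
  have m1 := cfcₙ_mul k (fun s => s) h c1 hk0 c0 rfl
  have m2 := cfcₙ_mul (fun s => s) k h c0 rfl c1 hk0
  have m3 := cfcₙ_mul k (fun s => s * k s) h c1 hk0 (c0.mul c1) (by simp)
  have s1 := cfcₙ_sub (fun s => s) (fun s => k s * s) h c0 rfl (c1.mul c0) (by simp)
  have s2 := cfcₙ_sub (fun s => s - k s * s) (fun s => s * k s) h (c0.sub (c1.mul c0)) (by simp)
    (c0.mul c1) (by simp)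
  have s3 := cfcₙ_add (a := h) (fun s => s - k s * s - s * k s) (fun s => k s * (s * k s))
    ((c0.sub (c1.mul c0)).sub (c0.mul c1)) (by simp) (c1.mul (c0.mul c1)) (by simp)
  rw [s3, s2, s1, m3, m2, m1, cfcₙ_id' ℝ h]

/-- Lifting without increasing the norm: truncate `x` by the function `min 1 (‖q x‖ / √s)` of
`s = x⋆x`, which equals `1` on the spectrum of `q (x⋆x)`. -/
lemma exists_lift_norm_le {A B : Type*} [NonUnitalCStarAlgebra A] [NonUnitalCStarAlgebra B]
    (q : A →⋆ₙₐ[ℂ] B) (x : A) : ∃ y : A, q y = q x ∧ ‖y‖ ≤ ‖q x‖ := by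
  by_cases hb : q x = 0
  · exact ⟨0, by simp [hb], by simp⟩
  have hβ : 0 < ‖q x‖ := norm_pos_iff.2 hb
  set β := ‖q x‖ with hβdef
  -- the `max` keeps the denominator away from `0`, so that `k` is continuous with `k 0 = 0`
  set k : ℝ → ℝ := fun s => 1 - β / √(max s (β ^ 2)) with hk
  have hkc : Continuous k := by
    refine continuous_const.sub (continuous_const.div (by fun_prop) fun s => ?_)
    exact (Real.sqrt_pos.2 (lt_of_lt_of_le (by positivity) (le_max_right _ _))).ne'
  have hksmall : ∀ s ≤ β ^ 2, k s = 0 := fun s hs => by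
    simp only [hk, max_eq_right hs, Real.sqrt_sq hβ.le, div_self hβ.ne', sub_self]
  have hk0 : k 0 = 0 := hksmall 0 (by positivity)
  set h := star x * x with hh
  have hsa : IsSelfAdjoint h := IsSelfAdjoint.star_mul_self x
  set g := cfcₙ k h with hg
  have hgsa : star g = g := (cfcₙ_predicate k h : IsSelfAdjoint _).star_eq
  have hq : q g = 0 := by
    have hqc : Continuous q := continuous_of_starHom q
    rw [hg, NonUnitalStarAlgHom.map_cfcₙ q k h hkc.continuousOn hk0 hqc hsa (hsa.map q)]
    have : Set.EqOn k (fun _ => 0) (quasispectrum ℝ (q h)) := fun s hs => by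
      apply hksmall
      have h1 := NonUnitalIsometricContinuousFunctionalCalculus.norm_quasispectrum_le (𝕜 := ℝ) (q h) hs (hsa.map q)
      have h2 : ‖q h‖ = β ^ 2 := by
        rw [hh, map_mul, map_star, CStarRing.norm_star_mul_self, sq]
      rw [h2] at h1
      exact (le_abs_self s).trans h1
    rw [cfcₙ_congr this]; simp
  refine ⟨x - x * g, by simp [hq], ?_⟩
  have hyy : star (x - x * g) * (x - x * g) = cfcₙ (fun s => s - k s * s - s * k s + k s * (s * k s)) h := by
    rw [← cfcn_compress hsa hkc hk0, ← hg]
    simp only [star_sub, star_mul, hgsa, hh]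
    noncomm_ring
  have hn : ‖star (x - x * g) * (x - x * g)‖ ≤ β ^ 2 := by
    rw [hyy]
    refine norm_cfcₙ_le fun s hs => ?_
    have hs0 : 0 ≤ s := by
      let _ := CStarAlgebra.spectralOrder A
      let _ := CStarAlgebra.spectralOrderedRing A
      exact quasispectrum_nonneg_of_nonneg h (star_mul_self_nonneg x) s hs
    have e1 : s - k s * s - s * k s + k s * (s * k s) = s * (1 - k s) ^ 2 := by ring
    have e2 : (1 - k s) ^ 2 = β ^ 2 / max s (β ^ 2) := by
      simp only [hk]
      rw [sub_sub_cancel, div_pow, Real.sq_sqrt (by positivity)]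
    have hmax : 0 < max s (β ^ 2) := lt_of_lt_of_le (by positivity) (le_max_right _ _)
    rw [e1, e2, Real.norm_of_nonneg (by positivity), mul_div_assoc', div_le_iff₀ hmax, mul_comm]
    gcongr
    exact le_max_left _ _
  rw [CStarRing.norm_star_mul_self, ← sq] at hn
  exact abs_le_of_sq_le_sq' hn hβ.le |>.2

/-- The approximate unit of the C⋆-algebra `ker q`, viewed in the unitization of `A`. -/
lemma approx_unit_ker {A B : Type*} [NonUnitalCStarAlgebra A] [NonUnitalCStarAlgebra B]
    [PartialOrder (Unitization ℂ A)] [StarOrderedRing (Unitization ℂ A)]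
    (q : A →⋆ₙₐ[ℂ] B) (S : Finset (Unitization ℂ A))
    (hS : ∀ z ∈ S, ∃ x : A, q x = 0 ∧ z = x) (ε : ℝ) (hε : 0 < ε) :
    ∃ u : Unitization ℂ A, (∃ x : A, q x = 0 ∧ u = x) ∧ 0 ≤ u ∧ u ≤ 1 ∧
      ∀ z ∈ S, ‖u * z - z‖ ≤ ε := by
  let K : NonUnitalStarSubalgebra ℂ A := NonUnitalStarAlgHom.equalizer q 0
  have hK : ∀ x : A, x ∈ K ↔ q x = 0 := fun x => Iff.rfl
  have hqc : Continuous q := continuous_of_starHom q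
  have : IsClosed (K : Set A) := isClosed_eq hqc continuous_const
  let _ : NonUnitalCStarAlgebra K := NonUnitalStarSubalgebra.nonUnitalCStarAlgebra K
  let _ := CStarAlgebra.spectralOrder K
  let _ := CStarAlgebra.spectralOrderedRing K
  have hl := CStarAlgebra.increasingApproximateUnit K
  have hev : ∀ᶠ u : K in CStarAlgebra.approximateUnit K, ∀ z ∈ S,
      ‖((u : A) : Unitization ℂ A) * z - z‖ ≤ ε := by
    rw [Filter.eventually_all_finset]
    intro z hz
    obtain ⟨x, hx, rfl⟩ := hS z hz
    have h1 := hl.tendsto_mul_right ⟨x, hx⟩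
    filter_upwards [Metric.tendsto_nhds.1 h1 ε hε] with u hu
    rw [dist_eq_norm] at hu
    rw [← Unitization.inr_mul, ← Unitization.inr_sub, Unitization.norm_inr]
    exact hu.le
  obtain ⟨u, hu, hu0, hu1⟩ := (hev.and (hl.eventually_nonneg.and hl.eventually_norm)).exists
  have h0 : 0 ≤ ((u : A) : Unitization ℂ A) := by
    obtain ⟨d, rfl⟩ := (CStarAlgebra.nonneg_iff_eq_star_mul_self).1 hu0
    have : (((star d * d : K) : A) : Unitization ℂ A) = star ((d : A) : Unitization ℂ A) * ((d : A) : Unitization ℂ A) := by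
      simp
    rw [this]
    exact star_mul_self_nonneg _
  refine ⟨_, ⟨u, u.2, rfl⟩, h0, ?_, hu⟩
  rw [← CStarAlgebra.norm_le_one_iff_of_nonneg _ h0, Unitization.norm_inr]
  exact hu1

/-! ### Elementary operators -/

section ElementaryOperator

variable {A B : Type*} [NonUnitalCStarAlgebra A] [NonUnitalCStarAlgebra B]

lemma mul_mem_ker (q : A →⋆ₙₐ[ℂ] B) (f : Unitization ℂ A) (x : Unitization ℂ A)
    (hx : ∃ w : A, q w = 0 ∧ x = w) : ∃ w : A, q w = 0 ∧ f * x = w := by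
  obtain ⟨w, hw, rfl⟩ := hx
  refine ⟨f.fst • w + f.snd * w, by simp [hw], ?_⟩
  ext <;> simp

lemma mem_ker_mul (q : A →⋆ₙₐ[ℂ] B) (f : Unitization ℂ A) (x : Unitization ℂ A)
    (hx : ∃ w : A, q w = 0 ∧ x = w) : ∃ w : A, q w = 0 ∧ x * f = w := by
  obtain ⟨w, hw, rfl⟩ := hx
  refine ⟨f.fst • w + w * f.snd, by simp [hw], ?_⟩
  ext <;> simp

lemma add_mem_ker (q : A →⋆ₙₐ[ℂ] B) (x : Unitization ℂ A) (hx : ∃ w : A, q w = 0 ∧ x = w)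
    (y : Unitization ℂ A) (hy : ∃ w : A, q w = 0 ∧ y = w) : ∃ w : A, q w = 0 ∧ x + y = w := by
  obtain ⟨w, hw, rfl⟩ := hx
  obtain ⟨v, hv, rfl⟩ := hy
  exact ⟨w + v, by simp [hw, hv], by simp⟩

variable {N : ℕ} {a c : Fin N → Unitization ℂ A} {T : A → A}

lemma elementary_sub
    (hT : ∀ x : A, (T x : Unitization ℂ A) = ∑ i, a i * (x : Unitization ℂ A) * c i) (x y : A) :
    T (x - y) = T x - T y := by
  apply Unitization.inr_injective (R := ℂ)
  rw [Unitization.inr_sub, hT, hT, hT, ← Finset.sum_sub_distrib]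
  simp [mul_sub, sub_mul]

/-- Elementary operators preserve ideals. -/
lemma elementary_ker (q : A →⋆ₙₐ[ℂ] B)
    (hT : ∀ x : A, (T x : Unitization ℂ A) = ∑ i, a i * (x : Unitization ℂ A) * c i)
    {x : A} (hx : q x = 0) : q (T x) = 0 := by
  have : ∃ w : A, q w = 0 ∧ (T x : Unitization ℂ A) = w := by
    rw [hT x]
    refine Finset.sum_induction _ (fun s : Unitization ℂ A => ∃ w : A, q w = 0 ∧ s = w)
      (fun s t hs ht => add_mem_ker q s hs t ht) ⟨0, by simp, by simp⟩ fun i _ => ?_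
    exact mem_ker_mul q _ _ (mul_mem_ker q _ _ ⟨x, hx, rfl⟩)
  obtain ⟨w, hw, h⟩ := this
  rw [Unitization.inr_injective h, hw]

/-- The improvement step: a lift whose image under `T` has norm within `ε` of `‖b‖` can be replaced
by one whose image has norm within an arbitrary `δ` of `‖b‖`, moving the image by at most
`ε + δ`. -/
lemma elementary_step (q : A →⋆ₙₐ[ℂ] B)
    (hT : ∀ x : A, (T x : Unitization ℂ A) = ∑ i, a i * (x : Unitization ℂ A) * c i)
    {b : B} {z : A} (hz : q z = b) (hTz : q (T z) = b) {ε δ : ℝ} (hε : 0 < ε) (hδ : 0 < δ)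
    (hn : ‖T z‖ ≤ ‖b‖ + ε) :
    ∃ z' : A, q z' = b ∧ ‖T z'‖ ≤ ‖b‖ + δ ∧ ‖T z' - T z‖ ≤ ε + δ := by
  classical
  let _ := CStarAlgebra.spectralOrder (Unitization ℂ A)
  let _ := CStarAlgebra.spectralOrderedRing (Unitization ℂ A)
  obtain ⟨y, hqy, hy⟩ := exists_lift_norm_le q (T z)
  rw [hTz] at hqy hy
  -- chosen so that `(1 - t) * (‖b‖ + ε) = ‖b‖` and `t * (‖b‖ + ε) = ε`
  set t : ℝ := ε / (‖b‖ + ε) with ht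
  have hbε : 0 < ‖b‖ + ε := by positivity
  have ht0 : 0 ≤ t := by positivity
  have ht1 : t ≤ 1 := by rw [ht, div_le_one hbε]; linarith [norm_nonneg b]
  have htb : t * (‖b‖ + ε) = ε := by rw [ht]; field_simp
  set x : Unitization ℂ A := (T z : Unitization ℂ A) with hx
  have hxn : ‖x‖ ≤ ‖b‖ + ε := by rw [hx, Unitization.norm_inr]; exact hn
  set v : Unitization ℂ A := x - t • x with hv
  have hvn : ‖v‖ ≤ ‖b‖ := by
    have : v = (1 - t) • x := by rw [hv, sub_smul, one_smul]
    rw [this, norm_smul, Real.norm_of_nonneg (by linarith)]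
    nlinarith
  have hyn : ‖(y : Unitization ℂ A)‖ ≤ ‖b‖ := by rw [Unitization.norm_inr]; exact hy
  obtain ⟨F, η, hη, hF⟩ := norm_convex_comb_le hyn hvn (δ := δ / 3) (by positivity)
  set C : ℝ := ∑ i, ‖z‖ * ‖c i‖ with hC
  have hC0 : 0 ≤ C := by positivity
  obtain ⟨κ, hκ0, hκη, hκδ, hκC⟩ : ∃ κ > 0, κ ≤ η ∧ κ ≤ δ / 3 ∧ κ * C ≤ δ / 3 := by
    refine ⟨min (min η (δ / 3)) (δ / 3 / (C + 1)), by positivity,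
      (min_le_left _ _).trans (min_le_left _ _), (min_le_left _ _).trans (min_le_right _ _), ?_⟩
    calc _ ≤ δ / 3 / (C + 1) * (C + 1) := by
          gcongr
          · exact min_le_right _ _
          · linarith
      _ = δ / 3 := by field_simp
  obtain ⟨e, ⟨e', hqe, rfl⟩, he0, he1, hez, heF⟩ := exists_quasicentral_s2
    (U := Unitization ℂ A) {s | ∃ w : A, q w = 0 ∧ s = w} ⟨0, by simp, by simp⟩
    (add_mem_ker q) (mul_mem_ker q) (mem_ker_mul q) (approx_unit_ker q)
    (F ∪ Finset.univ.image a) (z := x - y) ⟨T z - y, by simp [hTz, hqy], by simp [hx]⟩ hκ0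
  set e : Unitization ℂ A := (e' : Unitization ℂ A) with he
  have hen : ‖e‖ ≤ 1 := (CStarAlgebra.norm_le_one_iff_of_nonneg e he0).2 he1
  have hw := hF e he0 he1 fun f hf => (heF f (Finset.mem_union_left _ hf)).trans hκη
  -- the failure of `T` to commute with left multiplication by `e`
  set E : Unitization ℂ A := ∑ i, (e * a i - a i * e) * (z : Unitization ℂ A) * c i with hE
  have hEn : ‖E‖ ≤ δ / 3 := by
    refine le_trans ?_ hκC
    rw [hE, hC, Finset.mul_sum]
    refine (norm_sum_le _ _).trans (Finset.sum_le_sum fun i _ => ?_)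
    have h1 := heF (a i) (Finset.mem_union_right _ (Finset.mem_image_of_mem a (Finset.mem_univ i)))
    calc _ ≤ ‖e * a i - a i * e‖ * ‖(z : Unitization ℂ A)‖ * ‖c i‖ :=
          (norm_mul_le _ _).trans (by gcongr; exact norm_mul_le _ _)
      _ ≤ κ * (‖z‖ * ‖c i‖) := by rw [Unitization.norm_inr, mul_assoc]; gcongr
  have hTz' : (T (z - t • (e' * z)) : Unitization ℂ A) = x - t • (e * x) + t • E := by
    rw [elementary_sub hT, Unitization.inr_sub, ← hx, sub_add, ← smul_sub]
    congr 1
    rw [hT, hE, hx, hT z, Finset.mul_sum, ← Finset.sum_sub_distrib, Finset.smul_sum]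
    refine Finset.sum_congr rfl fun i _ => ?_
    rw [Unitization.inr_smul, Unitization.inr_mul, mul_smul_comm, smul_mul_assoc]
    congr 1
    noncomm_ring
  have htE : ‖t • E‖ ≤ δ / 3 := by
    rw [norm_smul, Real.norm_of_nonneg ht0]
    nlinarith [norm_nonneg E]
  refine ⟨z - t • (e' * z), ?_, ?_, ?_⟩
  · have : q (t • (e' * z)) = 0 := by
      rw [← Complex.coe_smul, map_smul, map_mul, hqe, zero_mul, smul_zero]
    rw [map_sub, this, hz, sub_zero]
  · have h1 : x - t • (e * x) + t • E = ((1 - e) * y + e * v) - (e * (x - y) - (x - y)) + t • E := by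
      rw [hv, mul_sub e x, mul_smul_comm]; noncomm_ring
    rw [← Unitization.norm_inr (𝕜 := ℂ), hTz', h1]
    have h2 := norm_add_le (((1 - e) * y + e * v) - (e * (x - y) - (x - y))) (t • E)
    have h3 := norm_sub_le ((1 - e) * y + e * v) (e * (x - y) - (x - y))
    linarith
  · rw [← Unitization.norm_inr (𝕜 := ℂ), Unitization.inr_sub, hTz', ← hx]
    have h1 : x - t • (e * x) + t • E - x = t • E - t • (e * x) := by abel
    have h2 : ‖t • (e * x)‖ ≤ ε := by
      rw [norm_smul, Real.norm_of_nonneg ht0, ← htb]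
      gcongr
      calc _ ≤ ‖e‖ * ‖x‖ := norm_mul_le _ _
        _ ≤ 1 * (‖b‖ + ε) := by gcongr
        _ = _ := one_mul _
    rw [h1]
    linarith [norm_sub_le (t • E) (t • (e * x))]

end ElementaryOperator

/-- Let `A` be a C*-algebra, `I` a closed two-sided ideal with quotient map
`q : A → A/I` (encoded as a surjective non-unital star algebra homomorphism onto a
C*-algebra `B`, which is automatically the quotient by its kernel), and `T : A → A` an
elementary operator with coefficients in the minimal unitization. Let `b ∈ A/I`. If some
lift `a₀` of `b` satisfies that `T a₀` is again a lift of `b`, then the closure of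
`{T a : q a = b}` contains an element of norm `‖b‖` (which is in particular a lift of `b`). -/
theorem stmt_2 {A B : Type*} [NonUnitalCStarAlgebra A] [NonUnitalCStarAlgebra B]
    (q : A →⋆ₙₐ[ℂ] B) (hq : Function.Surjective q)
    (N : ℕ) (a c : Fin N → Unitization ℂ A) (T : A → A)
    (hT : ∀ x : A, (T x : Unitization ℂ A) = ∑ i, a i * (x : Unitization ℂ A) * c i)
    (b : B) (a₀ : A) (ha₀ : q a₀ = b) (hTa₀ : q (T a₀) = b) :
    ∃ x ∈ closure {y : A | ∃ z : A, q z = b ∧ y = T z}, ‖x‖ = ‖b‖ ∧ q x = b := by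
  have hlift : ∀ z : A, q z = b → q (T z) = b := fun z hz => by
    have h1 := elementary_ker q hT (x := z - a₀) (by rw [map_sub, hz, ha₀, sub_self])
    rw [elementary_sub hT, map_sub, hTa₀] at h1
    exact sub_eq_zero.1 h1
  set K : ℝ := ‖T a₀‖ + 1 with hK
  have hK0 : 0 < K := by positivity
  have step : ∀ (n : ℕ) (p : {z : A // q z = b ∧ ‖T z‖ ≤ ‖b‖ + K / 2 ^ n}),
      ∃ p' : {z : A // q z = b ∧ ‖T z‖ ≤ ‖b‖ + K / 2 ^ (n + 1)},
        ‖T p'.1 - T p.1‖ ≤ K / 2 ^ n + K / 2 ^ (n + 1) := by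
    rintro n ⟨z, hz, hzn⟩
    obtain ⟨z', h1, h2, h3⟩ := elementary_step q hT hz (hlift z hz) (ε := K / 2 ^ n)
      (δ := K / 2 ^ (n + 1)) (by positivity) (by positivity) hzn
    exact ⟨⟨z', h1, h2⟩, h3⟩
  choose next hnext using step
  let p : ∀ n : ℕ, {z : A // q z = b ∧ ‖T z‖ ≤ ‖b‖ + K / 2 ^ n} := fun n =>
    Nat.rec ⟨a₀, ha₀, by rw [pow_zero, div_one, hK]; linarith [norm_nonneg b]⟩ next n
  have hdist : ∀ n, dist (T (p n).1) (T (p (n + 1)).1) ≤ 4 * K / 2 / 2 ^ n := fun n => by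
    rw [dist_comm, dist_eq_norm]
    refine (hnext n (p n)).trans ?_
    rw [pow_succ]
    have : 0 < K / 2 ^ n := by positivity
    have e1 : K / (2 ^ n * 2) = K / 2 ^ n / 2 := by rw [div_div]
    have e2 : 4 * K / 2 / 2 ^ n = 2 * (K / 2 ^ n) := by ring
    rw [e1, e2]; linarith
  obtain ⟨x, hx⟩ := cauchySeq_tendsto_of_complete (cauchySeq_of_le_geometric_two hdist)
  have hqx : q x = b := by
    have h1 := ((continuous_of_starHom q).tendsto x).comp hx
    refine tendsto_nhds_unique h1 (tendsto_const_nhds.congr fun n => ?_)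
    exact (hlift _ (p n).2.1).symm
  refine ⟨x, mem_closure_of_tendsto hx (Eventually.of_forall fun n => ⟨_, (p n).2.1, rfl⟩),
    le_antisymm ?_ ?_, hqx⟩
  · have hlim : Tendsto (fun n : ℕ => ‖b‖ + K / 2 ^ n) atTop (𝓝 (‖b‖ + 0)) := by
      refine tendsto_const_nhds.add ?_
      have := (tendsto_pow_atTop_nhds_zero_of_lt_one (r := (1 / 2 : ℝ)) (by norm_num)
        (by norm_num)).const_mul K
      simpa [div_eq_mul_inv] using this
    rw [add_zero] at hlim
    exact le_of_tendsto_of_tendsto' hx.norm hlim fun n => (p n).2.2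
  · rw [← hqx]; exact NonUnitalStarAlgHom.norm_apply_le q x
end

section
/- Let A be a C*-algebra, I a closed two-sided ideal of A, q : A → A/I the quotient map, and a ∈ A with image ȧ = q(a). Then q maps the hereditary C*-subalgebra closure(aAa) onto closure(ȧ(A/I)ȧ), and the kernel of the restriction of q to closure(aAa) is closure(aIa); consequently closure(ȧ(A/I)ȧ) is *-isomorphic to closure(aAa)/closure(aIa). -/
/-!
The set `closure (aAa)` has two-sided approximate units of a special shape: by functional
calculus in `a a*` there are `b`, `c` with `‖a b‖ ≤ 1`, `‖c a‖ ≤ 1` and `(a b) x (c a)` as close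
to `x ∈ closure (aAa)` as desired (`exists_two_sided_unit`). Since `(a b) x (c a) = a (b x c) a`,
an `x ∈ closure (aAa)` in the ideal `ker q` is a limit of elements of `a (ker q) a`, which is the
claim on the kernel.

For surjectivity, let `x ∈ aAa`. The open mapping theorem gives `y` with `q y = q x` and
`‖y‖ ≤ C ‖q x‖`. Compressing `x - y ∈ ker q` to `k = (a b) (x - y) (c a)`, the element `x - k`
of `aAa` still lifts `q x` and has norm at most `(C + 1) ‖q x‖`. So elements of `q a B q a`
have norm-controlled lifts in the complete space `closure (aAa)`, and summing a series of such
lifts yields lifts of all elements of the closure.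
-/

/-- The unit `a b` is `u(a a*)` with `u(t) = t² / (t² + s²)`; the estimate comes from
`(u(h) a - a) (u(h) a - a)* = v(h)` with `h = a a*` and `v(t) = t (1 - u(t))²`, where `|v| ≤ s`. -/
lemma exists_left_unit {A : Type*} [NonUnitalCStarAlgebra A] (a : A) {ε : ℝ} (hε : 0 < ε) :
    ∃ b : A, ‖a * b‖ ≤ 1 ∧ ‖a * b * a - a‖ ≤ ε := by
  obtain ⟨s, hs, hsε⟩ : ∃ s : ℝ, 0 < s ∧ s ≤ ε ^ 2 := ⟨ε ^ 2, by positivity, le_rfl⟩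
  set h : A := a * star a with hh
  have hsa : IsSelfAdjoint h := IsSelfAdjoint.mul_star_self a
  have hpos : ∀ t : ℝ, t ^ 2 + s ^ 2 ≠ 0 := fun t => by positivity
  set g : ℝ → ℝ := fun t => t / (t ^ 2 + s ^ 2) with hg
  have hgc : Continuous g := by
    rw [hg]
    exact continuous_id.div (by fun_prop) hpos
  have hg0 : g 0 = 0 := by simp [hg]
  set u : ℝ → ℝ := fun t => t * g t with hu
  have huc : Continuous u := by fun_prop
  have hu0 : u 0 = 0 := by simp [hu]
  have he : a * (star a * cfcₙ g h) = cfcₙ u h := by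
    rw [← mul_assoc, ← hh, hu,
      cfcₙ_mul (fun t : ℝ => t) g h continuousOn_id rfl hgc.continuousOn hg0, cfcₙ_id' ℝ h]
  refine ⟨star a * cfcₙ g h, ?_, ?_⟩
  · rw [he]
    refine norm_cfcₙ_le fun t _ => ?_
    have : u t = t ^ 2 / (t ^ 2 + s ^ 2) := by simp only [hu, hg]; ring
    rw [this, Real.norm_of_nonneg (by positivity), div_le_one (by positivity)]
    nlinarith [sq_nonneg s]
  · rw [he]
    have hue : star (cfcₙ u h) = cfcₙ u h := (cfcₙ_predicate u h : IsSelfAdjoint _)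
    have key : (cfcₙ u h * a - a) * star (cfcₙ u h * a - a) =
        cfcₙ (fun t : ℝ => (u t * t * u t - u t * t) - (t * u t - t)) h := by
      have hid : Continuous (fun t : ℝ => t) := continuous_id
      rw [cfcₙ_sub (fun t : ℝ => u t * t * u t - u t * t) (fun t : ℝ => t * u t - t) h
          (by fun_prop) (by simp) (by fun_prop) (by simp),
        cfcₙ_sub (fun t : ℝ => u t * t * u t) (fun t : ℝ => u t * t) h
          (by fun_prop) (by simp) (by fun_prop) (by simp),
        cfcₙ_sub (fun t : ℝ => t * u t) (fun t : ℝ => t) h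
          (by fun_prop) (by simp) (by fun_prop) (by simp),
        cfcₙ_mul (fun t : ℝ => u t * t) u h
          (by fun_prop) (by simp) (by fun_prop) (by simp [hu0]),
        cfcₙ_mul u (fun t : ℝ => t) h
          (by fun_prop) (by simp [hu0]) (by fun_prop) (by simp),
        cfcₙ_mul (fun t : ℝ => t) u h
          (by fun_prop) (by simp) (by fun_prop) (by simp [hu0]), cfcₙ_id' ℝ h]
      rw [star_sub, star_mul, hue, hh]
      noncomm_ring
    have hn : ‖cfcₙ (fun t : ℝ => (u t * t * u t - u t * t) - (t * u t - t)) h‖ ≤ s := by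
      refine norm_cfcₙ_le fun t _ => ?_
      have : (u t * t * u t - u t * t) - (t * u t - t) = t * s ^ 4 / (t ^ 2 + s ^ 2) ^ 2 := by
        have := hpos t
        simp only [hu, hg]
        field_simp
        ring
      rw [this, Real.norm_eq_abs, abs_div, abs_mul, abs_of_nonneg (by positivity : 0 ≤ s ^ 4),
        abs_of_nonneg (by positivity : 0 ≤ (t ^ 2 + s ^ 2) ^ 2), div_le_iff₀ (by positivity),
        ← sq_abs t]
      have h0 : 0 ≤ |t| := abs_nonneg t
      generalize |t| = r at h0
      have h1 : r * s ≤ r ^ 2 + s ^ 2 := by nlinarith [sq_nonneg (r - s)]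
      have h2 : s ^ 2 ≤ r ^ 2 + s ^ 2 := by nlinarith [sq_nonneg r]
      have h3 := mul_le_mul h1 h2 (by positivity) (by positivity)
      nlinarith [mul_le_mul_of_nonneg_left h3 hs.le]
    rw [← key, CStarRing.norm_self_mul_star] at hn
    exact abs_le_of_sq_le_sq' (by nlinarith) hε.le |>.2

lemma exists_two_sided_unit {A : Type*} [NonUnitalCStarAlgebra A] (a : A) {x : A}
    (hx : x ∈ closure {x : A | ∃ y : A, x = a * y * a}) {ε : ℝ} (hε : 0 < ε) :
    ∃ b c : A, ‖a * b‖ ≤ 1 ∧ ‖c * a‖ ≤ 1 ∧ ‖(a * b) * x * (c * a) - x‖ < ε := by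
  obtain ⟨_, ⟨y, rfl⟩, hy⟩ := Metric.mem_closure_iff.1 hx (ε / 4) (by positivity)
  rw [dist_eq_norm] at hy
  set M : ℝ := ‖a‖ * ‖y‖ with hM
  have hM0 : 0 ≤ M := by positivity
  obtain ⟨η, hη, hηε⟩ : ∃ η : ℝ, 0 < η ∧ η * M < ε / 4 := by
    refine ⟨ε / (4 * (M + 1)), by positivity, ?_⟩
    rw [div_mul_eq_mul_div, div_lt_div_iff₀ (by positivity) (by positivity)]
    nlinarith
  obtain ⟨b, hb, hb'⟩ := exists_left_unit a hη
  obtain ⟨c, hc, hc'⟩ := exists_left_unit (star a) hη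
  have hc1 : ‖star c * a‖ ≤ 1 := by
    rw [← norm_star]; simpa using hc
  have hc2 : ‖a * (star c * a) - a‖ ≤ η := by
    rw [← norm_star]; simpa using hc'
  refine ⟨b, star c, hb, hc1, ?_⟩
  generalize star c * a = f at hc1 hc2
  have e1 : ‖(a * b) * (x - a * y * a) * f‖ ≤ ‖x - a * y * a‖ := by
    calc _ ≤ ‖a * b‖ * ‖x - a * y * a‖ * ‖f‖ := norm_mul₃_le
      _ ≤ 1 * ‖x - a * y * a‖ * 1 := by gcongr
      _ = _ := by ring
  have e2 : ‖(a * b * a - a) * y * (a * f)‖ ≤ η * M := by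
    calc _ ≤ ‖a * b * a - a‖ * ‖y‖ * ‖a * f‖ := norm_mul₃_le
      _ ≤ ‖a * b * a - a‖ * ‖y‖ * (‖a‖ * ‖f‖) := by gcongr; exact norm_mul_le _ _
      _ ≤ η * ‖y‖ * (‖a‖ * 1) := by gcongr
      _ = _ := by rw [hM]; ring
  have e3 : ‖a * y * (a * f - a)‖ ≤ η * M := by
    calc _ ≤ ‖a‖ * ‖y‖ * ‖a * f - a‖ := norm_mul₃_le
      _ ≤ ‖a‖ * ‖y‖ * η := by gcongr
      _ = _ := by rw [hM]; ring
  have hdec : (a * b) * x * f - x = (a * b) * (x - a * y * a) * f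
      + (a * b * a - a) * y * (a * f) + a * y * (a * f - a) - (x - a * y * a) := by
    noncomm_ring
  rw [hdec]
  have t1 := norm_sub_le ((a * b) * (x - a * y * a) * f
      + (a * b * a - a) * y * (a * f) + a * y * (a * f - a)) (x - a * y * a)
  have t2 := norm_add₃_le (a := (a * b) * (x - a * y * a) * f)
      (b := (a * b * a - a) * y * (a * f)) (c := a * y * (a * f - a))
  linarith

/-- The additive subgroup `aAa`. -/
def cornerSubgroup {A : Type*} [NonUnitalCStarAlgebra A] (a : A) : AddSubgroup A where
  carrier := {x : A | ∃ y : A, x = a * y * a}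
  zero_mem' := ⟨0, by simp⟩
  add_mem' := by
    rintro _ _ ⟨y, rfl⟩ ⟨z, rfl⟩
    exact ⟨y + z, by noncomm_ring⟩
  neg_mem' := by
    rintro _ ⟨y, rfl⟩
    exact ⟨-y, by noncomm_ring⟩

/-- Elements of `q(a) B q(a)` have lifts in `aAa` of controlled norm. -/
lemma exists_controlled_lift {A B : Type*} [NonUnitalCStarAlgebra A] [NonUnitalCStarAlgebra B]
    (q : A →⋆ₙₐ[ℂ] B) (hq : Function.Surjective q) (a : A) :
    ∃ C > 0, ∀ z ∈ cornerSubgroup (q a), ∃ x ∈ cornerSubgroup a, q x = z ∧ ‖x‖ ≤ C * ‖z‖ := by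
  have hqc : Continuous q := AddMonoidHomClass.continuous_of_bound q 1 fun x => by
    simpa using NonUnitalStarAlgHom.norm_apply_le q x
  let L : A →L[ℂ] B := ⟨(q : A →ₗ[ℂ] B), hqc⟩
  obtain ⟨C, hC, hL⟩ := L.exists_preimage_norm_le hq
  refine ⟨C + 1, by positivity, ?_⟩
  rintro _ ⟨w, rfl⟩
  obtain ⟨v, rfl⟩ := hq w
  rw [← map_mul, ← map_mul]
  set x := a * v * a with hx
  rcases eq_or_ne (q x) 0 with h0 | h0
  · exact ⟨0, zero_mem _, by simp [h0], by simp [h0]⟩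
  obtain ⟨y, hy, hyC⟩ := hL (q x)
  replace hy : q y = q x := hy
  obtain ⟨b, c, hb, hc, hbc⟩ :=
    exists_two_sided_unit a (subset_closure ⟨v, hx⟩) (norm_pos_iff.2 h0)
  refine ⟨x - a * b * (x - y) * (c * a), ?_, ?_, ?_⟩
  · exact sub_mem ⟨v, hx⟩ ⟨b * (x - y) * c, by simp only [mul_assoc]⟩
  · simp [hy]
  · have h1 : x - a * b * (x - y) * (c * a)
        = a * b * y * (c * a) - (a * b * x * (c * a) - x) := by noncomm_ring
    have h2 : ‖a * b * y * (c * a)‖ ≤ ‖y‖ := by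
      calc _ ≤ ‖a * b‖ * ‖y‖ * ‖c * a‖ := norm_mul₃_le
        _ ≤ 1 * ‖y‖ * 1 := by gcongr
        _ = _ := by ring
    rw [h1]
    have := norm_sub_le (a * b * y * (c * a)) (a * b * x * (c * a) - x)
    linarith


/-- Let `A` be a C*-algebra, `I` a closed two-sided ideal with quotient map
`q : A → A/I` (encoded as a surjective non-unital star algebra homomorphism `q : A → B`
whose kernel is `I`), and `a ∈ A` with image `ȧ = q a`. Then `q` maps `closure (aAa)` onto
`closure (ȧ B ȧ)`, and the kernel of the restriction of `q` to `closure (aAa)` is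
`closure (aIa)`; consequently `closure (ȧ B ȧ) ≅ closure (aAa) / closure (aIa)`. -/
theorem stmt_3 {A B : Type*} [NonUnitalCStarAlgebra A] [NonUnitalCStarAlgebra B]
    (q : A →⋆ₙₐ[ℂ] B) (hq : Function.Surjective q)
    (I : Set A) (hI : I = {x : A | q x = 0})
    (a : A) :
    q '' closure {x : A | ∃ y : A, x = a * y * a} =
      closure {z : B | ∃ w : B, z = q a * w * q a} ∧
    {x : A | x ∈ closure {x : A | ∃ y : A, x = a * y * a} ∧ q x = 0} =
      closure {x : A | ∃ i ∈ I, x = a * i * a} := by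
  have hqc : Continuous q := AddMonoidHomClass.continuous_of_bound q 1 fun x => by
    simpa using NonUnitalStarAlgHom.norm_apply_le q x
  subst hI
  refine ⟨Set.Subset.antisymm ?_ ?_, Set.Subset.antisymm ?_ ?_⟩
  · refine (image_closure_subset_closure_image hqc).trans (closure_mono ?_)
    rintro _ ⟨_, ⟨y, rfl⟩, rfl⟩
    exact ⟨q y, by simp⟩
  · intro z hz
    obtain ⟨C, hC, hlift⟩ := exists_controlled_lift q hq a
    let E : AddSubgroup A := (cornerSubgroup a).topologicalClosure
    have : CompleteSpace E :=
      (AddSubgroup.isClosed_topologicalClosure (cornerSubgroup a)).completeSpace_coe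
    let f : NormedAddGroupHom E B :=
      ((q : A →+ B).comp E.subtype).mkNormedAddGroupHom 1 fun x => by
        simpa using NonUnitalStarAlgHom.norm_apply_le q (x : A)
    have hf : f.SurjectiveOnWith (cornerSubgroup (q a)) C := by
      intro z hz
      obtain ⟨x, hx, hxz, hxC⟩ := hlift z hz
      exact ⟨⟨x, subset_closure hx⟩, hxz, hxC⟩
    obtain ⟨x, hx, -⟩ := controlled_closure_of_complete hC one_pos hf z hz
    exact ⟨x, x.2, hx⟩
  · rintro x ⟨hx, hqx⟩
    refine Metric.mem_closure_iff.2 fun ε hε => ?_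
    obtain ⟨b, c, -, -, hbc⟩ := exists_two_sided_unit a hx hε
    refine ⟨_, ⟨b * x * c, by simp [hqx], rfl⟩, ?_⟩
    rw [dist_comm, dist_eq_norm]
    simpa only [mul_assoc] using hbc
  · intro x hx
    refine ⟨closure_mono ?_ hx, ?_⟩
    · rintro _ ⟨i, -, rfl⟩
      exact ⟨i, rfl⟩
    · refine closure_minimal ?_ (isClosed_eq hqc continuous_const) hx
      rintro _ ⟨i, hi, rfl⟩
      have hi' : q i = 0 := hi
      simp [hi']
end

section
/- Let A be a unital C*-algebra which is SAW*, and let p ∈ A be a projection (p = p* = p²). Then the corner C*-algebra pAp is SAW*: for any self-adjoint a, b ∈ pAp with ab = 0, there exists z ∈ pAp with 0 ≤ z ≤ p such that az = a and zb = 0. -/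
/-- Let `A` be a unital C*-algebra which is SAW*, and let `p ∈ A` be a
projection. Then the corner `pAp` is SAW*: for self-adjoint `a, b ∈ pAp` with `a * b = 0`
there is `z ∈ pAp` with `0 ≤ z ≤ p`, `a * z = a` and `z * b = 0`. -/
theorem stmt_4 {A : Type*} [CStarAlgebra A] [PartialOrder A] [StarOrderedRing A]
    (hSAW : ∀ a b : A, IsSelfAdjoint a → IsSelfAdjoint b → a * b = 0 →
      ∃ z : A, 0 ≤ z ∧ z ≤ 1 ∧ a * z = a ∧ z * b = 0)
    (p : A) (hp_sa : IsSelfAdjoint p) (hp_idem : IsIdempotentElem p) :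
    ∀ a b : A, a = p * a * p → b = p * b * p →
      IsSelfAdjoint a → IsSelfAdjoint b → a * b = 0 →
      ∃ z : A, z = p * z * p ∧ 0 ≤ z ∧ z ≤ p ∧ a * z = a ∧ z * b = 0 := by
  intro a b ha hb ha_sa hb_sa hab
  obtain ⟨z, hz0, hz1, haz, hzb⟩ := hSAW a b ha_sa hb_sa hab
  have hpp : p * p = p := hp_idem
  have hap : a * p = a := by
    rw [ha, mul_assoc, hpp]
  have hpb : p * b = b := by
    rw [hb, ← mul_assoc, ← mul_assoc, hpp]
  -- The compression `p * z * p` works: it is trapped between `0` and `p * 1 * p = p`,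
  -- and `p` is absorbed by `a` on the right and by `b` on the left.
  refine ⟨p * z * p, ?_, ?_, ?_, ?_, ?_⟩
  · rw [← mul_assoc, ← mul_assoc, hpp, mul_assoc (p * z), hpp]
  · have h := star_left_conjugate_nonneg hz0 p
    rwa [hp_sa.star_eq] at h
  · have h := star_left_conjugate_le_conjugate hz1 p
    rwa [hp_sa.star_eq, mul_one, hpp] at h
  · rw [← mul_assoc, ← mul_assoc, hap, haz, hap]
  · rw [mul_assoc, hpb, mul_assoc, hzb, mul_zero]
end
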